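/- arXiv:2310.15121 — 2 statements merged into one kernel-verified Lean document; each statement's English description precedes it below -/
import Mathlib

section
/- Existence of discrete, faithful, irreducible, rational representations of surface groups in SL(n): for every n ≥ 2 and every g ≥ 2, there exists an injective group homomorphism ρ from the genus-g surface group Σ_g to SL(n,ℝ) such that every matrix entry of every element of the image of ρ is rational (lies in the range of the coercion ℚ → ℝ), the image of ρ is a discrete subgroup of SL(n,ℝ), and the image of ρ acts irreducibly on ℝⁿ (the only ℝ-subspaces of (Fin n → ℝ) invariant under every matrix in the image are 0 and ℝⁿ). -/
/-- `SL(n,R)` carries the subspace topology induced from the space of matrices. -/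
instance specialLinearGroupTopology (n : Type*) [DecidableEq n] [Fintype n]
    (R : Type*) [CommRing R] [TopologicalSpace R] :
    TopologicalSpace (Matrix.SpecialLinearGroup n R) :=
  TopologicalSpace.induced ((↑) : Matrix.SpecialLinearGroup n R → Matrix n n R) inferInstance

/-- The surface relator `[a₁,b₁] ⋯ [a_g,b_g]` in the free group on `a₁,b₁,…,a_g,b_g`. -/
def surfaceRelator (g : ℕ) : FreeGroup (Fin g ⊕ Fin g) :=
  (List.ofFn fun i : Fin g =>
    FreeGroup.of (Sum.inl i) * FreeGroup.of (Sum.inr i) *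
      (FreeGroup.of (Sum.inl i))⁻¹ * (FreeGroup.of (Sum.inr i))⁻¹).prod

/-- The genus-`g` surface group `Σ_g = ⟨a₁,b₁,…,a_g,b_g ∣ [a₁,b₁]⋯[a_g,b_g]⟩`. -/
abbrev SurfaceGroup (g : ℕ) : Type :=
  PresentedGroup ({surfaceRelator g} : Set (FreeGroup (Fin g ⊕ Fin g)))

section SymPower
open Polynomial

/-- rows of the symmetric power -/
noncomputable def symRow {K : Type*} [CommRing K] (d : ℕ) (M : Matrix (Fin 2) (Fin 2) K) (i : ℕ) : K[X] :=
  (C (M 0 0) * X + C (M 0 1)) ^ i * (C (M 1 0) * X + C (M 1 1)) ^ (d - i)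

/-- the `d`-th symmetric power of a `2 × 2` matrix -/
noncomputable def symM {K : Type*} [CommRing K] (d : ℕ) (M : Matrix (Fin 2) (Fin 2) K) :
    Matrix (Fin (d + 1)) (Fin (d + 1)) K :=
  Matrix.of fun i j => (symRow d M i).coeff j

lemma hom_linear_mul {K A : Type*} [CommRing K] [CommRing A] [Algebra K A] (a b : K) (s t : A)
    (D : ℕ) (f : K[X]) (hf : f.natDegree ≤ D) :
    ∑ j ∈ Finset.range (D + 2), algebraMap K A (((C a * X + C b) * f).coeff j) * (s ^ j * t ^ (D + 1 - j))
     = (algebraMap K A a * s + algebraMap K A b * t) *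
      ∑ j ∈ Finset.range (D + 1), algebraMap K A (f.coeff j) * (s ^ j * t ^ (D - j)) := by
  have h1 : ∀ j, ((C a * X + C b) * f).coeff j = a * (X * f).coeff j + b * f.coeff j := by
    intro j
    rw [add_mul, coeff_add, mul_assoc, coeff_C_mul, coeff_C_mul]
  simp only [h1]
  simp only [map_add, map_mul, add_mul, Finset.sum_add_distrib]
  congr 1
  · rw [Finset.sum_range_succ']
    simp only [coeff_X_mul, coeff_X_mul_zero, map_zero, mul_zero, zero_mul, add_zero]
    rw [Finset.mul_sum]
    refine Finset.sum_congr rfl fun j _ => ?_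
    rw [show D + 1 - (j + 1) = D - j by omega]
    ring
  · rw [Finset.sum_range_succ, coeff_eq_zero_of_natDegree_lt (show f.natDegree < D + 1 by omega)]
    simp only [map_zero, mul_zero, zero_mul, add_zero]
    rw [Finset.mul_sum]
    refine Finset.sum_congr rfl fun j hj => ?_
    rw [Finset.mem_range] at hj
    rw [show D + 1 - j = (D - j) + 1 by omega]
    ring

lemma natDegree_lin_le {K : Type*} [CommRing K] (a b : K) : (C a * X + C b).natDegree ≤ 1 :=
  natDegree_linear_le

lemma hom_pow {K A : Type*} [CommRing K] [CommRing A] [Algebra K A] (a b c d : K) (s t : A)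
    (i k : ℕ) :
    ∑ j ∈ Finset.range (i + k + 1),
      algebraMap K A (((C a * X + C b) ^ i * (C c * X + C d) ^ k).coeff j) * (s ^ j * t ^ (i + k - j))
     = (algebraMap K A a * s + algebraMap K A b * t) ^ i *
       (algebraMap K A c * s + algebraMap K A d * t) ^ k := by
  induction i with
  | zero =>
    induction k with
    | zero => simp
    | succ k ih =>
      simp only [pow_zero, one_mul, zero_add] at ih ⊢
      have h := hom_linear_mul c d s t k ((C c * X + C d) ^ k) (by
        refine (natDegree_pow_le_of_le k (natDegree_lin_le c d)).trans (by simp))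
      rw [ih] at h
      simp only [pow_succ']
      exact h
  | succ i ih =>
    have h := hom_linear_mul a b s t (i + k) ((C a * X + C b) ^ i * (C c * X + C d) ^ k) (by
        refine natDegree_mul_le_of_le (natDegree_pow_le_of_le i (natDegree_lin_le a b))
          (natDegree_pow_le_of_le k (natDegree_lin_le c d)) |>.trans (by simp))
    rw [ih] at h
    rw [show i + 1 + k = i + k + 1 by omega, pow_succ', pow_succ', mul_assoc, mul_assoc]
    exact h

lemma symM_mul {K : Type*} [CommRing K] (d : ℕ) (M N : Matrix (Fin 2) (Fin 2) K) :
    symM d (M * N) = symM d M * symM d N := by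
  have key : ∀ i : ℕ, i ≤ d → symRow d (M * N) i =
      ∑ k : Fin (d + 1), C ((symRow d M i).coeff k) * symRow d N k := by
    intro i hi
    have h := hom_pow (M 0 0) (M 0 1) (M 1 0) (M 1 1) (A := K[X])
      (C (N 0 0) * X + C (N 0 1)) (C (N 1 0) * X + C (N 1 1)) i (d - i)
    rw [show i + (d - i) = d by omega] at h
    rw [Finset.sum_range] at h
    simp only [symRow]
    rw [show (algebraMap K K[X]) = C from rfl] at h
    rw [h]
    simp only [Matrix.mul_apply, Fin.sum_univ_two, map_add, map_mul]
    congr 2 <;> ring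
  ext i j
  rw [Matrix.mul_apply]
  simp only [symM, Matrix.of_apply]
  rw [key i (by omega), finsetSum_coeff]
  simp [coeff_C_mul]

lemma symM_diagonal {K : Type*} [CommRing K] (d : ℕ) (D : Fin 2 → K) :
    symM d (Matrix.diagonal D) = Matrix.diagonal fun i : Fin (d + 1) => D 0 ^ (i : ℕ) * D 1 ^ (d - i) := by
  ext i j
  have h : symRow d (Matrix.diagonal D) i = C (D 0 ^ (i : ℕ) * D 1 ^ (d - i)) * X ^ (i : ℕ) := by
    simp [symRow, mul_pow]
    ring
  simp only [symM, Matrix.of_apply, Matrix.diagonal_apply]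
  rw [h, coeff_C_mul, coeff_X_pow]
  simp [Fin.ext_iff, eq_comm]

lemma symM_one {K : Type*} [CommRing K] (d : ℕ) : symM d (1 : Matrix (Fin 2) (Fin 2) K) = 1 := by
  rw [← Matrix.diagonal_one, symM_diagonal]
  simp

lemma symM_map {K K' : Type*} [CommRing K] [CommRing K'] (f : K →+* K') (d : ℕ)
    (M : Matrix (Fin 2) (Fin 2) K) : symM d (M.map f) = (symM d M).map f := by
  ext i j
  simp only [symM, symRow, Matrix.of_apply, Matrix.map_apply]
  rw [← coeff_map]
  simp

lemma det_symM_one_of_transvection (d : ℕ) (t : Matrix.TransvectionStruct (Fin 2) ℝ) :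
    (symM d t.toMatrix).det = 1 := by
  have hc : ∀ A B A' B' : Matrix (Fin 2) (Fin 2) ℝ, A * A' = 1 → B * B' = 1 →
      (symM d (A * B * A' * B')).det = 1 := by
    intro A B A' B' h1 h2
    have e1 : (symM d A).det * (symM d A').det = 1 := by
      rw [← Matrix.det_mul, ← symM_mul, h1, symM_one, Matrix.det_one]
    have e2 : (symM d B).det * (symM d B').det = 1 := by
      rw [← Matrix.det_mul, ← symM_mul, h2, symM_one, Matrix.det_one]
    simp only [symM_mul, Matrix.det_mul]
    calc _ = ((symM d A).det * (symM d A').det) * ((symM d B).det * (symM d B').det) := by ring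
      _ = 1 := by rw [e1, e2, one_mul]
  obtain ⟨i, j, hij, c⟩ := t
  have hh : (i = 0 ∧ j = 1) ∨ (i = 1 ∧ j = 0) := by omega
  rcases hh with ⟨rfl, rfl⟩ | ⟨rfl, rfl⟩
  · rw [show (Matrix.TransvectionStruct.mk 0 1 hij c).toMatrix =
      !![2, 0; 0, 1] * !![1, c; 0, 1] * !![1/2, 0; 0, 1] * !![1, -c; 0, 1] by
        ext a b
        fin_cases a <;> fin_cases b <;>
          simp [Matrix.transvection, Matrix.single, Matrix.mul_apply, Fin.sum_univ_two] <;> ring]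
    apply hc <;> ext a b <;> fin_cases a <;> fin_cases b <;>
      simp [Matrix.mul_apply, Fin.sum_univ_two]
  · rw [show (Matrix.TransvectionStruct.mk 1 0 hij c).toMatrix =
      !![1, 0; 0, 2] * !![1, 0; c, 1] * !![1, 0; 0, 1/2] * !![1, 0; -c, 1] by
        ext a b
        fin_cases a <;> fin_cases b <;>
          simp [Matrix.transvection, Matrix.single, Matrix.mul_apply, Fin.sum_univ_two] <;> ring]
    apply hc <;> ext a b <;> fin_cases a <;> fin_cases b <;>
      simp [Matrix.mul_apply, Fin.sum_univ_two]

lemma det_symM (d : ℕ) (M : Matrix (Fin 2) (Fin 2) ℝ) :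
    (symM d M).det = M.det ^ (∑ i : Fin (d + 1), (i : ℕ)) := by
  refine Matrix.diagonal_transvection_induction
    (fun M => (symM d M).det = M.det ^ (∑ i : Fin (d + 1), (i : ℕ))) M ?_ ?_ ?_
  · intro D _
    rw [symM_diagonal, Matrix.det_diagonal, Matrix.det_diagonal, Finset.prod_mul_distrib,
      Finset.prod_pow_eq_pow_sum, Finset.prod_pow_eq_pow_sum, Fin.prod_univ_two, mul_pow]
    congr 2
    rw [← Equiv.sum_comp Fin.revPerm]
    refine Finset.sum_congr rfl fun i _ => ?_
    simp [Fin.revPerm, Fin.val_rev]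
    omega
  · intro t
    rw [det_symM_one_of_transvection, Matrix.TransvectionStruct.det, one_pow]
  · intro A B hA hB
    rw [symM_mul, Matrix.det_mul, Matrix.det_mul, hA, hB, mul_pow]

/-- the irreducible representation of `SL₂` -/
noncomputable def symHom (d : ℕ) :
    Matrix.SpecialLinearGroup (Fin 2) ℝ →* Matrix.SpecialLinearGroup (Fin (d + 1)) ℝ where
  toFun M := ⟨symM d M.1, by rw [det_symM, M.2, one_pow]⟩
  map_one' := Subtype.ext (symM_one d)
  map_mul' M N := Subtype.ext (symM_mul d M.1 N.1)

lemma symHom_coe (d : ℕ) (M : Matrix.SpecialLinearGroup (Fin 2) ℝ) :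
    (symHom d M).1 = symM d M.1 := rfl

lemma coeff_lin_pow {K : Type*} [CommRing K] (a b : K) (i j : ℕ) :
    ((C a * X + C b) ^ i).coeff j = a ^ j * b ^ (i - j) * (i.choose j : K) := by
  rw [add_pow, finsetSum_coeff]
  have : ∀ m, ((C a * X) ^ m * (C b) ^ (i - m) * ((i.choose m : ℕ) : K[X])).coeff j
      = if j = m then a ^ m * b ^ (i - m) * (i.choose m : K) else 0 := by
    intro m
    rw [show ((C a * X) ^ m * (C b) ^ (i - m) * ((i.choose m : ℕ) : K[X]))
      = C (a ^ m * b ^ (i - m) * (i.choose m : K)) * X ^ m by simp; ring, coeff_C_mul, coeff_X_pow]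
    simp
  simp only [this]
  rw [Finset.sum_ite_eq]
  split_ifs with h
  · rfl
  · rw [Finset.mem_range] at h
    rw [Nat.choose_eq_zero_of_lt (by omega)]
    simp

/-- last row -/
lemma symM_last_row (d : ℕ) (M : Matrix (Fin 2) (Fin 2) ℝ) (j : Fin (d + 1)) :
    symM d M (Fin.last d) j = M 0 0 ^ (j : ℕ) * M 0 1 ^ (d - j) * (d.choose j : ℝ) := by
  simp [symM, symRow, coeff_lin_pow]

lemma symM_zero_row (d : ℕ) (M : Matrix (Fin 2) (Fin 2) ℝ) (j : Fin (d + 1)) :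
    symM d M 0 j = M 1 0 ^ (j : ℕ) * M 1 1 ^ (d - j) * (d.choose j : ℝ) := by
  simp [symM, symRow, coeff_lin_pow]

lemma coeff_top_mul {K : Type*} [CommRing K] (a b c e : K) (i k : ℕ) :
    ((C a * X + C b) ^ i * (C c * X + C e) ^ k).coeff (i + k) = a ^ i * c ^ k := by
  rw [coeff_mul_add_eq_of_natDegree_le, coeff_lin_pow, coeff_lin_pow]
  · simp
  · simpa using natDegree_pow_le_of_le i (natDegree_lin_le a b)
  · simpa using natDegree_pow_le_of_le k (natDegree_lin_le c e)

/-- last column -/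
lemma symM_last_col (d : ℕ) (M : Matrix (Fin 2) (Fin 2) ℝ) (i : Fin (d + 1)) :
    symM d M i (Fin.last d) = M 0 0 ^ (i : ℕ) * M 1 0 ^ (d - i) := by
  have h := coeff_top_mul (M 0 0) (M 0 1) (M 1 0) (M 1 1) i (d - i)
  have hi : (i : ℕ) + (d - i) = d := by omega
  rw [hi] at h
  exact h

end SymPower
section Irred

lemma diag_pow_vanish {n : ℕ} (μ : Fin n → ℝ) (hμ : Function.Injective μ) (x y : Fin n → ℝ)
    (h : ∀ k : ℕ, ∑ i, x i * μ i ^ k * y i = 0) (i : Fin n) : x i * y i = 0 := by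
  have := Matrix.eq_zero_of_forall_pow_sum_mul_pow_eq_zero (f := μ) (v := fun i => x i * y i) hμ
    (fun k => by rw [← h k]; exact Finset.sum_congr rfl fun j _ => by ring)
  exact congrFun this i

/-- A set of matrices closed under multiplication, containing a diagonal matrix with distinct
eigenvalues, and a matrix with a nonzero column and row of the same index, is irreducible. -/
lemma irred_of_diag {n : ℕ} (S : Set (Matrix (Fin n) (Fin n) ℝ))
    (hS : ∀ A ∈ S, ∀ B ∈ S, A * B ∈ S) (h1 : (1 : Matrix (Fin n) (Fin n) ℝ) ∈ S)
    (μ : Fin n → ℝ) (hμ : Function.Injective μ) (hD : Matrix.diagonal μ ∈ S)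
    (A : Matrix (Fin n) (Fin n) ℝ) (hA : A ∈ S) (l : Fin n) (hrow : ∀ j, A l j ≠ 0)
    (hcol : ∀ i, A i l ≠ 0)
    (W : Submodule ℝ (Fin n → ℝ)) (hW : ∀ M ∈ S, ∀ w ∈ W, M.mulVec w ∈ W) : W = ⊥ ∨ W = ⊤ := by
  by_contra hcon
  push Not at hcon
  obtain ⟨hbot, htop⟩ := hcon
  obtain ⟨w, hw, hw0⟩ := Submodule.exists_mem_ne_zero_of_ne_bot hbot
  obtain ⟨f, hf0, hf⟩ := Submodule.exists_le_ker_of_lt_top W (lt_top_iff_ne_top.mpr htop)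
  set ℓ : Fin n → ℝ := fun i => f (Pi.single i 1) with hℓ
  have hfl : ∀ v, f v = ∑ i, ℓ i * v i := by
    intro v
    rw [LinearMap.pi_apply_eq_sum_univ f v]
    refine Finset.sum_congr rfl fun i _ => ?_
    rw [smul_eq_mul, mul_comm, hℓ]
    congr 2
    ext j
    simp [Pi.single_apply, eq_comm]
  have hpow : ∀ k : ℕ, Matrix.diagonal (fun i => μ i ^ k) ∈ S := by
    intro k
    induction k with
    | zero => simpa using h1
    | succ k ih =>
      have := hS _ ih _ hD
      rw [Matrix.diagonal_mul_diagonal] at this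
      simpa [pow_succ] using this
  have hz : ∀ M ∈ S, ∑ i, ℓ i * (M.mulVec w) i = 0 := by
    intro M hM
    rw [← hfl]
    exact hf (hW M hM w hw)
  obtain ⟨j, hj⟩ : ∃ j, w j ≠ 0 := by
    by_contra h
    push Not at h
    exact hw0 (funext h)
  obtain ⟨i, hi⟩ : ∃ i, ℓ i ≠ 0 := by
    by_contra h
    push Not at h
    apply hf0
    ext v
    simp [hfl, h]
  have hz1 : ∀ M ∈ S, (M.mulVec w) i = 0 := by
    intro M hM
    have := diag_pow_vanish μ hμ ℓ (M.mulVec w) (fun k => by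
      have h := hz _ (hS _ (hpow k) _ hM)
      rw [← h]
      refine Finset.sum_congr rfl fun m _ => ?_
      rw [← Matrix.mulVec_mulVec, Matrix.mulVec_diagonal]
      ring) i
    exact (mul_eq_zero.mp this).resolve_left hi
  have hz2 : ∀ M ∈ S, M i j = 0 := by
    intro M hM
    have := diag_pow_vanish μ hμ (fun m => M i m) w (fun k => by
      have h := hz1 _ (hS _ hM _ (hpow k))
      rw [← h, ← Matrix.mulVec_mulVec]
      simp only [Matrix.mulVec, dotProduct]
      refine Finset.sum_congr rfl fun m _ => ?_
      have h3 := Matrix.mulVec_diagonal (fun i => μ i ^ k) w m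
      simp only [Matrix.mulVec, dotProduct] at h3
      rw [h3]
      ring) j
    exact (mul_eq_zero.mp this).resolve_right hj
  have hz3 := diag_pow_vanish μ hμ (fun m => A i m) (fun m => A m j) (fun k => by
      have h := hz2 _ (hS _ (hS _ hA _ (hpow k)) _ hA)
      rw [← h, Matrix.mul_apply]
      refine Finset.sum_congr rfl fun m _ => ?_
      rw [Matrix.mul_diagonal]) l
  exact (mul_ne_zero (hcol i) (hrow j)) hz3

lemma symM_irred (d : ℕ) (S : Set (Matrix (Fin 2) (Fin 2) ℝ))
    (hS : ∀ A ∈ S, ∀ B ∈ S, A * B ∈ S) (h1 : (1 : Matrix (Fin 2) (Fin 2) ℝ) ∈ S)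
    (hD : Matrix.diagonal ![-1/4, -4] ∈ S)
    (A : Matrix (Fin 2) (Fin 2) ℝ) (hA : A ∈ S) (h00 : A 0 0 ≠ 0) (h01 : A 0 1 ≠ 0) (h10 : A 1 0 ≠ 0)
    (W : Submodule ℝ (Fin (d + 1) → ℝ)) (hW : ∀ M ∈ S, ∀ w ∈ W, (symM d M).mulVec w ∈ W) :
    W = ⊥ ∨ W = ⊤ := by
  refine irred_of_diag (symM d '' S) ?_ ⟨1, h1, symM_one d⟩
    (fun i : Fin (d + 1) => (-1/4) ^ (i : ℕ) * (-4) ^ (d - i)) ?_ ?_ (symM d A) ⟨A, hA, rfl⟩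
    (Fin.last d) ?_ ?_ W ?_
  · rintro _ ⟨M, hM, rfl⟩ _ ⟨N, hN, rfl⟩
    exact ⟨M * N, hS _ hM _ hN, symM_mul d M N⟩
  · intro i j hij
    simp only at hij
    have h2 := congrArg (fun x : ℝ => |x| * 4 ^ d) hij
    have key : ∀ i : Fin (d + 1), |(-1/4 : ℝ) ^ (i : ℕ) * (-4) ^ (d - i)| * 4 ^ (d)
        = (4 : ℝ) ^ (2 * (d - (i : ℕ))) := by
      intro i
      rw [abs_mul, abs_pow, abs_pow]
      rw [show |(-1/4 : ℝ)| = 1/4 by rw [abs_of_neg] <;> norm_num, show |(-4 : ℝ)| = 4 by norm_num]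
      have : (4 : ℝ) ^ d = 4 ^ (i : ℕ) * 4 ^ (d - (i : ℕ)) := by
        rw [← pow_add]; congr 1; omega
      rw [this, two_mul, pow_add, one_div, inv_pow]
      field_simp
    simp only [key] at h2
    have h3 := pow_right_injective₀ (by norm_num : (0 : ℝ) < 4) (by norm_num) h2
    apply Fin.ext
    omega
  · refine ⟨_, hD, ?_⟩
    rw [symM_diagonal]
    simp
  · intro j
    rw [symM_last_row]
    have : (d.choose j : ℝ) ≠ 0 := by
      exact_mod_cast (Nat.choose_pos (by omega)).ne'
    exact mul_ne_zero (mul_ne_zero (pow_ne_zero _ h00) (pow_ne_zero _ h01)) this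
  · intro i
    rw [symM_last_col]
    exact mul_ne_zero (pow_ne_zero _ h00) (pow_ne_zero _ h10)
  · rintro _ ⟨M, hM, rfl⟩ w hw
    exact hW M hM w hw

end Irred

section Disc
open Filter Topology

/-- coordinates of the quadratic form attached to a group element -/
def fP (M : Matrix (Fin 2) (Fin 2) ℝ) : ℝ := M 1 1 ^ 2 + 6 * (M 1 1 * M 1 0) + 13 * M 1 0 ^ 2
/-- coordinates of the quadratic form attached to a group element -/
def fQ (M : Matrix (Fin 2) (Fin 2) ℝ) : ℝ :=
  - (M 0 1 * M 1 1) - 3 * (M 0 0 * M 1 1) - 3 * (M 0 1 * M 1 0) - 13 * (M 0 0 * M 1 0)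
/-- coordinates of the quadratic form attached to a group element -/
def fR (M : Matrix (Fin 2) (Fin 2) ℝ) : ℝ := M 0 1 ^ 2 + 6 * (M 0 0 * M 0 1) + 13 * M 0 0 ^ 2

/-- The open fundamental quadrilateral. -/
def fundT (p q r : ℝ) : Prop :=
  0 < -2 * p - q ∧ 0 < 6 * p + 5 * q + r ∧ 0 < 12 * p + 7 * q + r ∧ 0 < 4 * p + q

lemma tendsto_of_pow_zero {ι : Type*} {l : Filter ι} {f : ι → ℝ} {d : ℕ} (hd : d ≠ 0)
    (h : Tendsto (fun i => f i ^ d) l (𝓝 0)) : Tendsto f l (𝓝 0) := by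
  rw [tendsto_zero_iff_abs_tendsto_zero] at h ⊢
  have h2 := (Real.continuousAt_rpow_const 0 ((d : ℝ)⁻¹) (Or.inr (by positivity))).tendsto.comp h
  rw [Real.zero_rpow (by positivity)] at h2
  refine h2.congr fun i => ?_
  simp only [Function.comp, abs_pow]
  exact Real.pow_rpow_inv_natCast (abs_nonneg _) hd

lemma tendsto_abs_of_pow_one {ι : Type*} {l : Filter ι} {f : ι → ℝ} {d : ℕ} (hd : d ≠ 0)
    (h : Tendsto (fun i => f i ^ d) l (𝓝 1)) : Tendsto (fun i => |f i|) l (𝓝 1) := by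
  have h := h.abs
  rw [abs_one] at h
  have h2 := (Real.continuousAt_rpow_const 1 ((d : ℝ)⁻¹) (Or.inl (by norm_num))).tendsto.comp h
  rw [Real.one_rpow] at h2
  refine h2.congr fun i => ?_
  simp only [Function.comp, abs_pow]
  exact Real.pow_rpow_inv_natCast (abs_nonneg _) hd

lemma symHom_near_one (d : ℕ) (hd : d ≠ 0) :
    ∃ N ∈ 𝓝 (1 : Matrix.SpecialLinearGroup (Fin (d + 1)) ℝ),
      ∀ M : Matrix.SpecialLinearGroup (Fin 2) ℝ, symHom d M ∈ N →
        fundT (fP M.1) (fQ M.1) (fR M.1) := by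
  set l : Filter (Matrix.SpecialLinearGroup (Fin 2) ℝ) := comap (symHom d) (𝓝 1) with hl
  suffices h : ∀ᶠ M in l, fundT (fP M.1) (fQ M.1) (fR M.1) by
    rw [hl, eventually_comap] at h
    exact ⟨_, h, fun M hM => hM M rfl⟩
  have hent : ∀ i j, Tendsto (fun M => symM d M.1 i j) l (𝓝 ((1 : Matrix (Fin (d+1)) (Fin (d+1)) ℝ) i j)) := by
    intro i j
    have hc : Continuous (fun g : Matrix.SpecialLinearGroup (Fin (d+1)) ℝ => g.1 i j) := by
      have : Continuous (fun g : Matrix.SpecialLinearGroup (Fin (d+1)) ℝ => g.1) :=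
        continuous_induced_dom
      exact this.matrix_elem i j
    exact (hc.tendsto 1).comp tendsto_comap
  have hne : Fin.last d ≠ 0 := by
    intro h
    exact hd (by simpa using congrArg Fin.val h)
  have e00 := hent (Fin.last d) (Fin.last d)
  have e01 := hent (Fin.last d) 0
  have e10 := hent 0 (Fin.last d)
  have e11 := hent 0 0
  simp only [symM_last_row, symM_zero_row, Matrix.one_apply_eq, Matrix.one_apply_ne hne,
    Matrix.one_apply_ne hne.symm, Fin.val_last, Fin.val_zero, Nat.sub_self, Nat.sub_zero, pow_zero,
    Nat.choose_self, Nat.choose_zero_right, Nat.cast_one, mul_one, one_mul] at e00 e01 e10 e11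
  have a00 := tendsto_abs_of_pow_one hd e00
  have a11 := tendsto_abs_of_pow_one hd e11
  have a01 := tendsto_of_pow_zero hd e01
  have a10 := tendsto_of_pow_zero hd e10
  have s00 : Tendsto (fun M : Matrix.SpecialLinearGroup (Fin 2) ℝ => M.1 0 0 ^ 2) l (𝓝 1) := by
    simpa using a00.pow 2
  have s11 : Tendsto (fun M : Matrix.SpecialLinearGroup (Fin 2) ℝ => M.1 1 1 ^ 2) l (𝓝 1) := by
    simpa using a11.pow 2
  have s01 : Tendsto (fun M : Matrix.SpecialLinearGroup (Fin 2) ℝ => M.1 0 1 ^ 2) l (𝓝 0) := by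
    simpa using a01.pow 2
  have s10 : Tendsto (fun M : Matrix.SpecialLinearGroup (Fin 2) ℝ => M.1 1 0 ^ 2) l (𝓝 0) := by
    simpa using a10.pow 2
  have m0110 : Tendsto (fun M : Matrix.SpecialLinearGroup (Fin 2) ℝ => M.1 0 1 * M.1 1 0) l (𝓝 0) := by
    simpa using a01.mul a10
  have m0011 : Tendsto (fun M : Matrix.SpecialLinearGroup (Fin 2) ℝ => M.1 0 0 * M.1 1 1) l (𝓝 1) := by
    have := m0110.const_add 1
    rw [add_zero] at this
    refine this.congr fun M => ?_
    have hdet := M.2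
    rw [Matrix.det_fin_two] at hdet
    linarith
  have m0111 : Tendsto (fun M : Matrix.SpecialLinearGroup (Fin 2) ℝ => M.1 0 1 * M.1 1 1) l (𝓝 0) := by
    rw [tendsto_zero_iff_abs_tendsto_zero]
    simpa [Function.comp_def, abs_mul] using a01.abs.mul a11
  have m1110 : Tendsto (fun M : Matrix.SpecialLinearGroup (Fin 2) ℝ => M.1 1 1 * M.1 1 0) l (𝓝 0) := by
    rw [tendsto_zero_iff_abs_tendsto_zero]
    simpa [Function.comp_def, abs_mul] using a11.mul a10.abs
  have m0001 : Tendsto (fun M : Matrix.SpecialLinearGroup (Fin 2) ℝ => M.1 0 0 * M.1 0 1) l (𝓝 0) := by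
    rw [tendsto_zero_iff_abs_tendsto_zero]
    simpa [Function.comp_def, abs_mul] using a00.mul a01.abs
  have m0010 : Tendsto (fun M : Matrix.SpecialLinearGroup (Fin 2) ℝ => M.1 0 0 * M.1 1 0) l (𝓝 0) := by
    rw [tendsto_zero_iff_abs_tendsto_zero]
    simpa [Function.comp_def, abs_mul] using a00.mul a10.abs
  have hP : Tendsto (fun M : Matrix.SpecialLinearGroup (Fin 2) ℝ => fP M.1) l (𝓝 1) := by
    have := (s11.add (m1110.const_mul 6)).add (s10.const_mul 13)
    simpa [fP] using this
  have hQ : Tendsto (fun M : Matrix.SpecialLinearGroup (Fin 2) ℝ => fQ M.1) l (𝓝 (-3)) := by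
    have := ((m0111.neg.sub (m0011.const_mul 3)).sub (m0110.const_mul 3)).sub (m0010.const_mul 13)
    simpa [fQ] using this
  have hR : Tendsto (fun M : Matrix.SpecialLinearGroup (Fin 2) ℝ => fR M.1) l (𝓝 13) := by
    have := (s01.add (m0001.const_mul 6)).add (s00.const_mul 13)
    simpa [fR] using this
  refine Filter.Eventually.and ?_ (Filter.Eventually.and ?_ (Filter.Eventually.and ?_ ?_))
  · exact ((hP.const_mul (-2)).sub hQ).eventually_const_lt (by norm_num)
  · exact (((hP.const_mul 6).add (hQ.const_mul 5)).add hR).eventually_const_lt (by norm_num)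
  · exact (((hP.const_mul 12).add (hQ.const_mul 7)).add hR).eventually_const_lt (by norm_num)
  · exact ((hP.const_mul 4).add hQ).eventually_const_lt (by norm_num)

end Disc
section PingPongSection
open FreeGroup hiding map_mul map_one map_inv

/-- inverse letter -/
def linv (s : Bool × Bool) : Bool × Bool := (s.1, !s.2)

/-- the commutator -/
def cc : FreeGroup Bool := of false * of true * (of false)⁻¹ * (of true)⁻¹

/-- suffixes of the commutator -/
def hh : Bool × Bool → FreeGroup Bool
  | (true, true) => 1
  | (false, true) => (of true)⁻¹
  | (true, false) => (of false)⁻¹ * (of true)⁻¹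
  | (false, false) => of true * (of false)⁻¹ * (of true)⁻¹

/-- cyclic order of the letters -/
def nxt : Bool × Bool → Bool × Bool
  | (true, true) => (false, true)
  | (false, true) => (true, false)
  | (true, false) => (false, false)
  | (false, false) => (true, true)

/-- whether a full turn was made -/
def ee : Bool × Bool → ℕ
  | (false, false) => 1
  | _ => 0

lemma mk_true (a : Bool) : (mk [(a, true)] : FreeGroup Bool) = of a := rfl
lemma mk_false (a : Bool) : (mk [(a, false)] : FreeGroup Bool) = (of a)⁻¹ := rfl

lemma linv_hh (t : Bool × Bool) : mk [linv t] * hh t = hh (nxt t) * cc ^ ee t := by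
  obtain ⟨a, b⟩ := t
  cases a <;> cases b <;> simp [linv, hh, nxt, ee, cc, mk_true, mk_false, mul_assoc]

lemma linv_linv (t : Bool × Bool) : linv (linv t) = t := by simp [linv]

lemma mk_linv (t : Bool × Bool) : (mk [linv t] : FreeGroup Bool) = (mk [t])⁻¹ := by
  simp [linv, inv_mk, invRev]

lemma hh_mk (t : Bool × Bool) : (hh t)⁻¹ * mk [t] = (hh (nxt t) * cc ^ ee t)⁻¹ := by
  rw [← linv_hh, mk_linv]
  group

/-- ping-pong data for the one-holed torus group acting on `G` by left translation -/
structure PingPong {G : Type*} [Group G] (φ : FreeGroup Bool →* G) (H : Bool × Bool → Set G)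
    (T Lb : Set G) : Prop where
  intro ::
  hH : ∀ s t, t ≠ linv s → ∀ x ∈ H t, φ (mk [s]) * x ∈ H s
  hT : ∀ s, ∀ x ∈ T, φ (mk [s]) * x ∈ H s
  hTH : ∀ s, ∀ x ∈ T, x ∉ H s
  hHH : ∀ s t, s ≠ t → ∀ x ∈ H s, x ∉ H t
  hL : ∀ t, ∀ x ∈ Lb, φ (hh t) * x ∈ H t
  hc : ∀ x ∈ Lb, φ cc * x ∈ Lb
  hc' : ∀ x ∈ Lb, φ cc⁻¹ * x ∈ Lb

variable {G : Type*} [Group G] {φ : FreeGroup Bool →* G} {H : Bool × Bool → Set G}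
    {T Lb : Set G}

lemma PingPong.cpow (h : PingPong φ H T Lb) (k : ℕ) : ∀ x ∈ Lb, φ (cc ^ k) * x ∈ Lb := by
  induction k with
  | zero => simp
  | succ k ih =>
    intro x hx
    rw [pow_succ, map_mul, mul_assoc]
    exact ih _ (h.hc x hx)

lemma PingPong.cpow' (h : PingPong φ H T Lb) (k : ℕ) : ∀ x ∈ Lb, φ ((cc ^ k)⁻¹) * x ∈ Lb := by
  induction k with
  | zero => simp
  | succ k ih =>
    intro x hx
    rw [pow_succ, mul_inv_rev, map_mul, mul_assoc]
    exact h.hc' _ (ih x hx)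

lemma PingPong.chain (h : PingPong φ H T Lb) (i : Bool × Bool) (x : G) (hx : x ∈ H i)
    (w : List (Bool × Bool)) (hw : IsReduced (w ++ [i])) :
    ∃ t, (w ++ [i]).head? = some t ∧ φ (mk w) * x ∈ H t := by
  induction w with
  | nil =>
    refine ⟨i, rfl, ?_⟩
    rw [← one_eq_mk, map_one, one_mul]
    exact hx
  | cons s w ih =>
    obtain ⟨t, ht, hxt⟩ := ih (hw.infix ⟨[s], [], by simp⟩)
    refine ⟨s, rfl, ?_⟩
    have hmk : (mk (s :: w) : FreeGroup Bool) = mk [s] * mk w := by rw [mul_mk]; rfl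
    rw [hmk, map_mul, mul_assoc]
    refine h.hH s t ?_ _ hxt
    rintro rfl
    cases hl : w ++ [i] with
    | nil => simp at hl
    | cons u l =>
      rw [hl] at ht
      simp only [List.head?_cons, Option.some.injEq] at ht
      rw [List.cons_append, hl, isReduced_cons_cons, ht] at hw
      have := hw.1 rfl
      simp [linv] at this

lemma isReduced_concat (w : List (Bool × Bool)) (s i : Bool × Bool) (hw : IsReduced (w ++ [s]))
    (hs : s ≠ linv i) : IsReduced (w ++ [s] ++ [i]) := by
  refine IsReduced.append_overlap hw ?_ (by simp)
  rw [List.singleton_append, isReduced_cons_cons]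
  refine ⟨fun h1 => ?_, IsReduced.singleton⟩
  by_contra h2
  apply hs
  obtain ⟨a, b⟩ := s
  obtain ⟨c, d⟩ := i
  simp only at h1 h2
  subst h1
  cases b <;> cases d <;> simp_all [linv]

lemma PingPong.pp1 (h : PingPong φ H T Lb) (w : FreeGroup Bool) (hw : w ≠ 1) (x : G) (hx : x ∈ T) :
    φ w * x ∉ T := by
  have hr : IsReduced w.toWord := isReduced_toWord
  have hmk : w = mk w.toWord := (mk_toWord).symm
  rcases List.eq_nil_or_concat' w.toWord with h0 | ⟨L, i, hL⟩
  · exact absurd (toWord_eq_nil_iff.mp h0) hw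
  · rw [hL] at hr hmk
    obtain ⟨t, _, ht⟩ := h.chain i _ (h.hT i x hx) L hr
    rw [hmk, ← mul_mk, map_mul, mul_assoc]
    exact fun hcon => h.hTH t _ hcon ht

lemma PingPong.pp2_aux (h : PingPong φ H T Lb) (w : List (Bool × Bool)) :
    ∀ (_ : IsReduced w) (i : Bool × Bool), ∀ x ∈ Lb, ∃ t, φ (mk w * hh i) * x ∈ H t := by
  induction w using List.reverseRecOn with
  | nil =>
    intro _ i x hx
    refine ⟨i, ?_⟩
    rw [← one_eq_mk, one_mul]
    exact h.hL i x hx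
  | append_singleton w s ih =>
    intro hw i x hx
    by_cases hs : s = linv i
    · have h2 := ih (hw.infix ⟨[], [s], by simp⟩) (nxt i) _ (h.cpow (ee i) x hx)
      rw [hs, ← mul_mk, mul_assoc, linv_hh, ← mul_assoc, map_mul, mul_assoc]
      exact h2
    · obtain ⟨t, _, ht⟩ := h.chain i _ (h.hL i x hx) _ (isReduced_concat w s i hw hs)
      refine ⟨t, ?_⟩
      rw [map_mul, mul_assoc]
      exact ht

lemma PingPong.pp2 (h : PingPong φ H T Lb) (w : FreeGroup Bool) (x : G) (hx : x ∈ T) :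
    φ w * x ∉ Lb := by
  intro hcon
  obtain ⟨t, ht⟩ := h.pp2_aux (w⁻¹).toWord isReduced_toWord (true, true) _ hcon
  rw [mk_toWord] at ht
  simp only [hh, mul_one, map_inv, inv_mul_cancel_left] at ht
  exact h.hTH t x hx ht

lemma mem_zpowers_of_mul_pow {x : FreeGroup Bool} (k : ℕ) (h : x ∈ Subgroup.zpowers cc) :
    x * cc ^ k ∈ Subgroup.zpowers cc :=
  Subgroup.mul_mem _ h (Subgroup.pow_mem _ (Subgroup.mem_zpowers cc) k)

lemma PingPong.pp3_aux (h : PingPong φ H T Lb) (n : ℕ) : ∀ w : List (Bool × Bool), w.length = n →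
    IsReduced w → ∀ i j, (hh j)⁻¹ * mk w * hh i ∈ Subgroup.zpowers cc ∨
      ∀ x ∈ Lb, φ ((hh j)⁻¹ * mk w * hh i) * x ∉ Lb := by
  induction n with
  | zero =>
    intro w hw _ i j
    rw [List.length_eq_zero_iff] at hw
    subst hw
    rw [← one_eq_mk, mul_one]
    by_cases hij : i = j
    · left
      subst hij
      rw [inv_mul_cancel]
      exact Subgroup.one_mem _
    · right
      intro x hx hcon
      have h1 := h.hL j _ hcon
      rw [← mul_assoc, ← map_mul, mul_inv_cancel_left] at h1
      exact h.hHH i j hij _ (h.hL i x hx) h1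
  | succ n ih =>
    intro w hw hr i j
    rcases List.eq_nil_or_concat' w with h0 | ⟨w', s, hs⟩
    · subst h0; simp at hw
    by_cases hsi : s = linv i
    · subst hs
      have hlen : w'.length = n := by simpa using hw
      have heq : (hh j)⁻¹ * mk (w' ++ [s]) * hh i = (hh j)⁻¹ * mk w' * hh (nxt i) * cc ^ ee i := by
        rw [hsi, ← mul_mk, mul_assoc _ _ (hh i), mul_assoc _ _ (hh i), linv_hh]
        simp only [mul_assoc]
      rw [heq]
      rcases ih w' hlen (hr.infix ⟨[], [s], by simp⟩) (nxt i) j with h1 | h1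
      · left; exact mem_zpowers_of_mul_pow _ h1
      · right
        intro x hx
        rw [map_mul, mul_assoc]
        exact h1 _ (h.cpow _ x hx)
    obtain ⟨t, w'', ht⟩ : ∃ t w'', w = t :: w'' := by
      cases w with
      | nil => simp at hw
      | cons t w'' => exact ⟨t, w'', rfl⟩
    by_cases htj : t = j
    · subst ht
      subst htj
      have hlen : w''.length = n := by simpa using hw
      have heq : (hh t)⁻¹ * mk (t :: w'') * hh i = (cc ^ ee t)⁻¹ * ((hh (nxt t))⁻¹ * mk w'' * hh i) := by
        have : (mk (t :: w'') : FreeGroup Bool) = mk [t] * mk w'' := by rw [mul_mk]; rfl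
        rw [this, ← mul_assoc, hh_mk]
        simp only [mul_assoc, mul_inv_rev]
      rw [heq]
      rcases ih w'' hlen (hr.infix ⟨[t], [], by simp⟩) i (nxt t) with h1 | h1
      · left
        exact Subgroup.mul_mem _ (Subgroup.inv_mem _
          (Subgroup.pow_mem _ (Subgroup.mem_zpowers cc) _)) h1
      · right
        intro x hx hcon
        apply h1 x hx
        have h2 := h.cpow (ee t) _ hcon
        rw [← mul_assoc, ← map_mul, mul_inv_cancel_left] at h2
        exact h2
    · right
      intro x hx hcon
      have hr2 : IsReduced (w ++ [i]) := by
        subst hs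
        exact isReduced_concat w' s i hr hsi
      obtain ⟨u, hu, hxu⟩ := h.chain i _ (h.hL i x hx) w hr2
      have hut : u = t := by
        rw [ht] at hu
        simpa using hu.symm
      subst hut
      have h1 := h.hL j _ hcon
      rw [← mul_assoc, ← map_mul, mul_assoc (hh j)⁻¹, mul_inv_cancel_left] at h1
      rw [← mul_assoc, ← map_mul] at hxu
      exact h.hHH u j htj _ hxu h1

lemma PingPong.pp3 (h : PingPong φ H T Lb) (w : FreeGroup Bool) (hw : w ∉ Subgroup.zpowers cc)
    (x : G) (hx : x ∈ Lb) : φ w * x ∉ Lb := by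
  have := h.pp3_aux _ w.toWord rfl isReduced_toWord (true, true) (true, true)
  simp only [mk_toWord, hh, inv_one, one_mul, mul_one] at this
  exact this.resolve_left hw x hx

/-- reduced words of the amalgam starting in the second factor -/
inductive Good {S : Type*} [Group S] (f₁ f₂ : FreeGroup Bool →* S) : S → Prop
  | base (w v : FreeGroup Bool) (hw : w ∉ Subgroup.zpowers cc) : Good f₁ f₂ (f₂ w * f₁ v)
  | step (w v : FreeGroup Bool) (δ : S) (hw : w ∉ Subgroup.zpowers cc)
      (hv : v ∉ Subgroup.zpowers cc) (hδ : Good f₁ f₂ δ) : Good f₁ f₂ (f₂ w * (f₁ v * δ))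

variable {S : Type*} [Group S] {f₁ f₂ : FreeGroup Bool →* S}

lemma good_form (hrel : f₁ cc * f₂ cc = 1) (hgen : f₁.range ⊔ f₂.range = ⊤) (γ : S) :
    (∃ v, γ = f₁ v) ∨ ∃ v δ, Good f₁ f₂ δ ∧ γ = f₁ v * δ := by
  have h21 : ∀ u ∈ Subgroup.zpowers cc, ∃ u' ∈ Subgroup.zpowers cc, f₂ u = f₁ u' := by
    rintro _ ⟨k, rfl⟩
    refine ⟨cc ^ (-k), ⟨-k, rfl⟩, ?_⟩
    have : f₂ cc = (f₁ cc)⁻¹ := (inv_eq_of_mul_eq_one_right hrel).symm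
    simp [this]
  have h12 : ∀ u ∈ Subgroup.zpowers cc, ∃ u' ∈ Subgroup.zpowers cc, f₁ u = f₂ u' := by
    rintro _ ⟨k, rfl⟩
    refine ⟨cc ^ (-k), ⟨-k, rfl⟩, ?_⟩
    have : f₂ cc = (f₁ cc)⁻¹ := (inv_eq_of_mul_eq_one_right hrel).symm
    simp [this]
  have key : ∀ u γ, ((∃ v, γ = f₁ v) ∨ ∃ v δ, Good f₁ f₂ δ ∧ γ = f₁ v * δ) →
      ((∃ v, f₂ u * γ = f₁ v) ∨ ∃ v δ, Good f₁ f₂ δ ∧ f₂ u * γ = f₁ v * δ) := by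
    rintro u γ (⟨v, rfl⟩ | ⟨v, δ, hδ, rfl⟩)
    · by_cases hu : u ∈ Subgroup.zpowers cc
      · obtain ⟨u', _, h'⟩ := h21 u hu
        exact Or.inl ⟨u' * v, by rw [h', map_mul]⟩
      · exact Or.inr ⟨1, _, Good.base u v hu, by simp⟩
    · by_cases hu : u ∈ Subgroup.zpowers cc
      · obtain ⟨u', _, h'⟩ := h21 u hu
        exact Or.inr ⟨u' * v, δ, hδ, by rw [h', map_mul, mul_assoc]⟩
      by_cases hv : v ∈ Subgroup.zpowers cc
      · obtain ⟨v', _, h'⟩ := h12 v hv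
        rw [h']
        cases hδ with
        | base w z hw =>
          by_cases hb : u * v' * w ∈ Subgroup.zpowers cc
          · obtain ⟨b', _, hb'⟩ := h21 _ hb
            refine Or.inl ⟨b' * z, ?_⟩
            rw [map_mul f₁, ← hb']
            simp only [map_mul, mul_assoc]
          · refine Or.inr ⟨1, _, Good.base _ z hb, ?_⟩
            simp only [map_mul, mul_assoc, map_one, one_mul]
        | step w z δ' hw hz hδ' =>
          by_cases hb : u * v' * w ∈ Subgroup.zpowers cc
          · obtain ⟨b', _, hb'⟩ := h21 _ hb
            refine Or.inr ⟨b' * z, δ', hδ', ?_⟩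
            rw [map_mul f₁, ← hb']
            simp only [map_mul, mul_assoc]
          · refine Or.inr ⟨1, _, Good.step _ z δ' hb hz hδ', ?_⟩
            simp only [map_mul, mul_assoc, map_one, one_mul]
      · exact Or.inr ⟨1, _, Good.step u v δ hu hv hδ, by simp⟩
  have key1 : ∀ u γ, ((∃ v, γ = f₁ v) ∨ ∃ v δ, Good f₁ f₂ δ ∧ γ = f₁ v * δ) →
      ((∃ v, f₁ u * γ = f₁ v) ∨ ∃ v δ, Good f₁ f₂ δ ∧ f₁ u * γ = f₁ v * δ) := by
    rintro u γ (⟨v, rfl⟩ | ⟨v, δ, hδ, rfl⟩)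
    · exact Or.inl ⟨u * v, by rw [map_mul]⟩
    · exact Or.inr ⟨u * v, δ, hδ, by rw [map_mul, mul_assoc]⟩
  have hmem : γ ∈ Subgroup.closure ((f₁.range : Set S) ∪ f₂.range) := by
    rw [← Subgroup.sup_eq_closure, hgen]
    trivial
  induction hmem using Subgroup.closure_induction_left with
  | one => exact Or.inl ⟨1, by simp⟩
  | mul_left x hx y hy ih =>
    rcases hx with ⟨u, rfl⟩ | ⟨u, rfl⟩
    · exact key1 u y ih
    · exact key u y ih
  | inv_mul_cancel x hx y hy ih =>
    rcases hx with ⟨u, rfl⟩ | ⟨u, rfl⟩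
    · rw [← map_inv]; exact key1 _ y ih
    · rw [← map_inv]; exact key _ y ih

theorem PingPong.amalgam (h : PingPong φ H T Lb) (hrel : f₁ cc * f₂ cc = 1)
    (hgen : f₁.range ⊔ f₂.range = ⊤) (ρ : S →* G) (J : G) (h1 : ∀ w, ρ (f₁ w) = φ w)
    (h2 : ∀ w, ρ (f₂ w) = J * φ w * J⁻¹) (hJ : ∀ x, x ∉ Lb → J * x ∈ Lb)
    (hJ' : ∀ x, x ∉ Lb → J⁻¹ * x ∈ Lb) (γ : S) (hγ : γ ≠ 1) (x : G) (hx : x ∈ T) :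
    ρ γ * x ∉ T := by
  have hgood : ∀ δ, Good f₁ f₂ δ → ρ δ * x ∈ Lb := by
    intro δ hδ
    induction hδ with
    | base w v hw =>
      rw [map_mul, h1, h2]
      simp only [mul_assoc]
      exact hJ _ (h.pp3 w hw _ (hJ' _ (h.pp2 v x hx)))
    | step w v δ hw hv hδ ih =>
      rw [map_mul, map_mul, h1, h2]
      simp only [mul_assoc]
      exact hJ _ (h.pp3 w hw _ (hJ' _ (h.pp3 v hv _ ih)))
  rcases good_form hrel hgen γ with ⟨v, rfl⟩ | ⟨v, δ, hδ, rfl⟩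
  · rw [h1]
    refine h.pp1 v ?_ x hx
    rintro rfl
    exact hγ (map_one _)
  · rw [map_mul, h1, mul_assoc]
    intro hcon
    have := h.pp2 v⁻¹ _ hcon
    rw [map_inv, inv_mul_cancel_left] at this
    exact this (hgood δ hδ)

end PingPongSection
section Concrete
open FreeGroup hiding map_mul map_one map_inv
open Matrix

lemma fP_mul (A M : Matrix (Fin 2) (Fin 2) ℝ) :
    fP (A * M) = A 1 1 ^ 2 * fP M - 2 * A 1 1 * A 1 0 * fQ M + A 1 0 ^ 2 * fR M := by
  simp only [fP, fQ, fR, Matrix.mul_apply, Fin.sum_univ_two]; ring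

lemma fQ_mul (A M : Matrix (Fin 2) (Fin 2) ℝ) :
    fQ (A * M) = - A 1 1 * A 0 1 * fP M + (A 1 1 * A 0 0 + A 1 0 * A 0 1) * fQ M
      - A 1 0 * A 0 0 * fR M := by
  simp only [fP, fQ, fR, Matrix.mul_apply, Fin.sum_univ_two]; ring

lemma fR_mul (A M : Matrix (Fin 2) (Fin 2) ℝ) :
    fR (A * M) = A 0 1 ^ 2 * fP M - 2 * A 0 0 * A 0 1 * fQ M + A 0 0 ^ 2 * fR M := by
  simp only [fP, fQ, fR, Matrix.mul_apply, Fin.sum_univ_two]; ring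

lemma form_pos (M : SpecialLinearGroup (Fin 2) ℝ) (x y : ℝ) (h : 0 < x ^ 2 + y ^ 2) :
    0 < fP M.1 * x ^ 2 + 2 * fQ M.1 * (x * y) + fR M.1 * y ^ 2 := by
  have hd : M.1 0 0 * M.1 1 1 - M.1 0 1 * M.1 1 0 = 1 := by rw [← Matrix.det_fin_two]; exact M.2
  have key : fP M.1 * x ^ 2 + 2 * fQ M.1 * (x * y) + fR M.1 * y ^ 2 =
      ((M.1 1 1 * x - M.1 0 1 * y) - 3 * (- M.1 1 0 * x + M.1 0 0 * y)) ^ 2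
        + 4 * (- M.1 1 0 * x + M.1 0 0 * y) ^ 2 := by
    simp only [fP, fQ, fR]; ring
  rw [key]
  by_contra hcon
  have h2 : (- M.1 1 0 * x + M.1 0 0 * y) = 0 := by
    rw [← sq_eq_zero_iff]
    nlinarith [sq_nonneg ((M.1 1 1 * x - M.1 0 1 * y) - 3 * (- M.1 1 0 * x + M.1 0 0 * y)),
      sq_nonneg (- M.1 1 0 * x + M.1 0 0 * y)]
  have h1 : (M.1 1 1 * x - M.1 0 1 * y) = 0 := by
    rw [h2] at hcon
    rw [← sq_eq_zero_iff]
    nlinarith [sq_nonneg (M.1 1 1 * x - M.1 0 1 * y)]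
  have hx : x = 0 := by linear_combination M.1 0 0 * h1 + M.1 0 1 * h2 - x * hd
  have hy : y = 0 := by linear_combination M.1 1 0 * h1 + M.1 1 1 * h2 - y * hd
  subst hx hy
  simp at h

/-- the linear forms of the four half planes -/
def ell : Bool × Bool → ℝ → ℝ → ℝ → ℝ
  | (true, true) => fun p q _ => -2 * p - q
  | (false, false) => fun p q r => 6 * p + 5 * q + r
  | (true, false) => fun p q r => 12 * p + 7 * q + r
  | (false, true) => fun p q _ => 4 * p + q

/-- first generator -/
def aq : SpecialLinearGroup (Fin 2) ℚ := ⟨!![-4, 10; -1/2, 1], by norm_num [Matrix.det_fin_two]⟩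
/-- second generator -/
def bq : SpecialLinearGroup (Fin 2) ℚ := ⟨!![1, -5; 1, -4], by norm_num [Matrix.det_fin_two]⟩
/-- rotation -/
def jq : SpecialLinearGroup (Fin 2) ℚ := ⟨!![0, -1; 1, 0], by norm_num [Matrix.det_fin_two]⟩

/-- base change to the reals -/
noncomputable def toR : SpecialLinearGroup (Fin 2) ℚ →* SpecialLinearGroup (Fin 2) ℝ :=
  Matrix.SpecialLinearGroup.map (algebraMap ℚ ℝ)

lemma toR_coe (M : SpecialLinearGroup (Fin 2) ℚ) : (toR M).1 = M.1.map (algebraMap ℚ ℝ) := rfl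

/-- the one-holed torus group over the rationals -/
def phq : FreeGroup Bool →* SpecialLinearGroup (Fin 2) ℚ := lift (fun b => cond b bq aq)

/-- the one-holed torus group -/
noncomputable def phr : FreeGroup Bool →* SpecialLinearGroup (Fin 2) ℝ := toR.comp phq

/-- explicit matrices of letters -/
def lmat : Bool × Bool → Matrix (Fin 2) (Fin 2) ℚ
  | (true, true) => !![1, -5; 1, -4]
  | (true, false) => !![-4, 5; -1, 1]
  | (false, true) => !![-4, 10; -1/2, 1]
  | (false, false) => !![1, -10; 1/2, -4]

lemma phq_f : phq (of false) = aq := by simp only [phq, lift_apply_of, cond_false]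
lemma phq_t : phq (of true) = bq := by simp only [phq, lift_apply_of, cond_true]

lemma aq_coe : (aq : Matrix (Fin 2) (Fin 2) ℚ) = !![-4, 10; -1/2, 1] := rfl
lemma bq_coe : (bq : Matrix (Fin 2) (Fin 2) ℚ) = !![1, -5; 1, -4] := rfl
lemma jq_coe : (jq : Matrix (Fin 2) (Fin 2) ℚ) = !![0, -1; 1, 0] := rfl
lemma aqi_coe : ((aq⁻¹ : SpecialLinearGroup (Fin 2) ℚ) : Matrix (Fin 2) (Fin 2) ℚ)
    = !![1, -10; 1/2, -4] := by
  rw [Matrix.SpecialLinearGroup.coe_inv, aq_coe, Matrix.adjugate_fin_two_of]; norm_num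
lemma bqi_coe : ((bq⁻¹ : SpecialLinearGroup (Fin 2) ℚ) : Matrix (Fin 2) (Fin 2) ℚ)
    = !![-4, 5; -1, 1] := by
  rw [Matrix.SpecialLinearGroup.coe_inv, bq_coe, Matrix.adjugate_fin_two_of]; norm_num
lemma jqi_coe : ((jq⁻¹ : SpecialLinearGroup (Fin 2) ℚ) : Matrix (Fin 2) (Fin 2) ℚ)
    = !![0, 1; -1, 0] := by
  rw [Matrix.SpecialLinearGroup.coe_inv, jq_coe, Matrix.adjugate_fin_two_of]; norm_num

lemma phq_mk (s : Bool × Bool) : (phq (mk [s]) : Matrix (Fin 2) (Fin 2) ℚ) = lmat s := by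
  obtain ⟨a, b⟩ := s
  cases a <;> cases b <;>
    simp only [mk_true, mk_false, lmat, map_inv, phq_f, phq_t, aq_coe, bq_coe, aqi_coe, bqi_coe]

lemma phq_cc : (phq cc : Matrix (Fin 2) (Fin 2) ℚ) = !![-4, 0; 0, -1/4] := by
  simp only [cc, map_mul, map_inv, phq_f, phq_t, Matrix.SpecialLinearGroup.coe_mul, aq_coe, bq_coe,
    aqi_coe, bqi_coe, Matrix.mul_fin_two]
  norm_num

lemma phq_cci : (phq cc⁻¹ : Matrix (Fin 2) (Fin 2) ℚ) = !![-1/4, 0; 0, -4] := by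
  rw [map_inv, Matrix.SpecialLinearGroup.coe_inv, phq_cc, Matrix.adjugate_fin_two_of]; norm_num

/-- explicit matrices of the suffixes -/
def hmat : Bool × Bool → Matrix (Fin 2) (Fin 2) ℚ
  | (true, true) => !![1, 0; 0, 1]
  | (false, true) => !![-4, 5; -1, 1]
  | (true, false) => !![6, -5; 2, -3/2]
  | (false, false) => !![-4, 5/2; -2, 1]

lemma phq_hh (s : Bool × Bool) : (phq (hh s) : Matrix (Fin 2) (Fin 2) ℚ) = hmat s := by
  obtain ⟨a, b⟩ := s
  cases a <;> cases b <;>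
    simp only [hh, hmat, map_one, map_mul, map_inv, phq_f, phq_t, Matrix.SpecialLinearGroup.coe_mul,
      Matrix.SpecialLinearGroup.coe_one, aq_coe, bq_coe,
      aqi_coe, bqi_coe, Matrix.mul_fin_two, Matrix.one_fin_two] <;> norm_num

lemma phr_coe (w : FreeGroup Bool) : (phr w).1 = (phq w).1.map (algebraMap ℚ ℝ) := rfl

/-- half planes -/
def Hset (s : Bool × Bool) : Set (SpecialLinearGroup (Fin 2) ℝ) :=
  {g | ell s (fP g.1) (fQ g.1) (fR g.1) < 0}

/-- base set -/
def Tset : Set (SpecialLinearGroup (Fin 2) ℝ) := {g | fundT (fP g.1) (fQ g.1) (fR g.1)}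

/-- closed half plane bounded by the axis -/
def Lset : Set (SpecialLinearGroup (Fin 2) ℝ) := {g | 0 ≤ fQ g.1}

/-- evaluate the forms on a product with a rational matrix -/
lemma form_mul (A : Matrix (Fin 2) (Fin 2) ℚ) (w : SpecialLinearGroup (Fin 2) ℚ) (hw : w.1 = A)
    (x : SpecialLinearGroup (Fin 2) ℝ) :
    fP (toR w * x).1 = (A 1 1 : ℝ) ^ 2 * fP x.1 - 2 * (A 1 1 : ℝ) * (A 1 0 : ℝ) * fQ x.1
      + (A 1 0 : ℝ) ^ 2 * fR x.1 ∧
    fQ (toR w * x).1 = - (A 1 1 : ℝ) * (A 0 1 : ℝ) * fP x.1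
      + ((A 1 1 : ℝ) * (A 0 0 : ℝ) + (A 1 0 : ℝ) * (A 0 1 : ℝ)) * fQ x.1
      - (A 1 0 : ℝ) * (A 0 0 : ℝ) * fR x.1 ∧
    fR (toR w * x).1 = (A 0 1 : ℝ) ^ 2 * fP x.1 - 2 * (A 0 0 : ℝ) * (A 0 1 : ℝ) * fQ x.1
      + (A 0 0 : ℝ) ^ 2 * fR x.1 := by
  subst hw
  refine ⟨fP_mul _ _, fQ_mul _ _, fR_mul _ _⟩

lemma ell_letter (s : Bool × Bool) (x : SpecialLinearGroup (Fin 2) ℝ)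
    (h : 0 < ell (linv s) (fP x.1) (fQ x.1) (fR x.1)) : phr (mk [s]) * x ∈ Hset s := by
  obtain ⟨h1, h2, h3⟩ := form_mul _ _ (phq_mk s) x
  change ell s (fP (toR (phq (mk [s])) * x).1) (fQ (toR (phq (mk [s])) * x).1)
    (fR (toR (phq (mk [s])) * x).1) < 0
  rw [h1, h2, h3]
  obtain ⟨a, b⟩ := s
  cases a <;> cases b <;> simp [ell, linv, lmat] at h ⊢ <;> linarith

lemma ell_sep (s t : Bool × Bool) (hst : t ≠ s) (x : SpecialLinearGroup (Fin 2) ℝ)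
    (h : ell t (fP x.1) (fQ x.1) (fR x.1) < 0) : 0 < ell s (fP x.1) (fQ x.1) (fR x.1) := by
  have h1 := form_pos x 1 0 (by norm_num)
  have h2 := form_pos x 0 1 (by norm_num)
  have h3 := form_pos x 2 1 (by norm_num)
  have h4 := form_pos x 3 1 (by norm_num)
  have h5 := form_pos x 4 1 (by norm_num)
  obtain ⟨a, b⟩ := s
  obtain ⟨c, d⟩ := t
  cases a <;> cases b <;> cases c <;> cases d <;> first
    | exact absurd rfl hst
    | (simp only [ell] at h ⊢; linarith)

lemma pingPong : PingPong phr Hset Tset Lset := by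
  have hT : ∀ x ∈ Tset, ∀ s, 0 < ell s (fP x.1) (fQ x.1) (fR x.1) := by
    rintro x ⟨h1, h2, h3, h4⟩ ⟨a, b⟩
    cases a <;> cases b <;> simpa only [ell]
  refine ⟨?_, ?_, ?_, ?_, ?_, ?_, ?_⟩
  · intro s t hst x hx
    exact ell_letter s x (ell_sep _ t hst x hx)
  · intro s x hx
    exact ell_letter s x (hT x hx _)
  · intro s x hx
    exact not_lt.mpr (hT x hx s).le
  · intro s t hst x hx
    exact not_lt.mpr (ell_sep t s hst x hx).le
  · intro s x hx
    obtain ⟨h1, h2, h3⟩ := form_mul _ _ (phq_hh s) x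
    change ell s (fP (toR (phq (hh s)) * x).1) (fQ (toR (phq (hh s)) * x).1)
      (fR (toR (phq (hh s)) * x).1) < 0
    rw [h1, h2, h3]
    have hx' : 0 ≤ fQ x.1 := hx
    have h1 := form_pos x 1 0 (by norm_num)
    have h2 := form_pos x 0 1 (by norm_num)
    have h3 := form_pos x 1 1 (by norm_num)
    obtain ⟨a, b⟩ := s
    cases a <;> cases b <;> simp [ell, hmat] <;> linarith
  · intro x hx
    obtain ⟨h1, h2, h3⟩ := form_mul _ _ phq_cc x
    change 0 ≤ fQ (toR (phq cc) * x).1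
    rw [h2]
    have hx' : 0 ≤ fQ x.1 := hx
    simp
    linarith
  · intro x hx
    obtain ⟨h1, h2, h3⟩ := form_mul _ _ phq_cci x
    change 0 ≤ fQ (toR (phq cc⁻¹) * x).1
    rw [h2]
    have hx' : 0 ≤ fQ x.1 := hx
    simp
    linarith

/-- images of the generators -/
def genq : Fin 2 ⊕ Fin 2 → SpecialLinearGroup (Fin 2) ℚ
  | Sum.inl i => if i = 0 then aq else jq * aq * jq⁻¹
  | Sum.inr i => if i = 0 then bq else jq * bq * jq⁻¹

lemma relq : aq * bq * aq⁻¹ * bq⁻¹ * (jq * (aq * bq * aq⁻¹ * bq⁻¹) * jq⁻¹) = 1 := by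
  apply Subtype.ext
  simp only [Matrix.SpecialLinearGroup.coe_mul, aq_coe, bq_coe, jq_coe, jqi_coe, Matrix.SpecialLinearGroup.coe_one,
    aqi_coe, bqi_coe, Matrix.mul_fin_two, Matrix.one_fin_two]
  norm_num

/-- the rational representation of the genus two surface group -/
def rhoq : SurfaceGroup 2 →* SpecialLinearGroup (Fin 2) ℚ :=
  PresentedGroup.toGroup (f := genq) (by
    intro r hr
    rw [Set.mem_singleton_iff] at hr
    subst hr
    simp only [surfaceRelator, List.ofFn_succ, List.ofFn_zero, List.prod_cons, List.prod_nil,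
      map_mul, map_inv, map_one, lift_apply_of, mul_one]
    refine Eq.trans ?_ relq
    simp [genq]
    group)

/-- generators of the genus two surface group -/
def sgen (x : Fin 2 ⊕ Fin 2) : SurfaceGroup 2 := PresentedGroup.of x

lemma rhoq_gen (x : Fin 2 ⊕ Fin 2) : rhoq (sgen x) = genq x := PresentedGroup.toGroup.of _

/-- inclusions of the two handles -/
def hdl (i : Fin 2) : FreeGroup Bool →* SurfaceGroup 2 :=
  lift (fun b => cond b (sgen (Sum.inr i)) (sgen (Sum.inl i)))

lemma hdl_cc (i : Fin 2) : hdl i cc = sgen (Sum.inl i) * sgen (Sum.inr i) * (sgen (Sum.inl i))⁻¹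
    * (sgen (Sum.inr i))⁻¹ := by
  simp only [hdl, cc, map_mul, map_inv, lift_apply_of, cond_true, cond_false]

lemma hdl_rel : hdl 0 cc * hdl 1 cc = 1 := by
  have h : PresentedGroup.mk ({surfaceRelator 2} : Set (FreeGroup (Fin 2 ⊕ Fin 2)))
      (surfaceRelator 2) = 1 := PresentedGroup.one_of_mem rfl
  rw [hdl_cc, hdl_cc, ← h]
  simp only [surfaceRelator, List.ofFn_succ, List.ofFn_zero, List.prod_cons, List.prod_nil,
      map_mul, map_inv, mul_one]
  rfl

/-- the discrete faithful real representation -/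
noncomputable def rhor : SurfaceGroup 2 →* SpecialLinearGroup (Fin 2) ℝ := toR.comp rhoq

theorem rhor_fund (γ : SurfaceGroup 2) (hγ : γ ≠ 1) :
    ¬ fundT (fP (rhor γ).1) (fQ (rhor γ).1) (fR (rhor γ).1) := by
  have hgen : (hdl 0).range ⊔ (hdl 1).range = ⊤ := by
    rw [eq_top_iff, ← PresentedGroup.closure_range_of, Subgroup.closure_le]
    rintro _ ⟨x, rfl⟩
    have hm : ∀ i : Fin 2, (hdl i).range ≤ (hdl 0).range ⊔ (hdl 1).range := by
      intro i
      fin_cases i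
      · exact le_sup_left
      · exact le_sup_right
    rcases x with i | i
    · exact hm i ⟨of false, by simp only [hdl, lift_apply_of, cond_false]; rfl⟩
    · exact hm i ⟨of true, by simp only [hdl, lift_apply_of, cond_true]; rfl⟩
  have hA := pingPong.amalgam hdl_rel hgen rhor (toR jq) ?_ ?_ ?_ ?_ γ hγ 1 ?_
  · rw [mul_one] at hA; exact hA
  · intro w
    have : rhor.comp (hdl 0) = phr := by
      ext b : 1
      cases b <;> simp [hdl, rhor, phr, rhoq_gen, genq, phq_f, phq_t]
    exact DFunLike.congr_fun this w
  · intro w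
    have : rhor.comp (hdl 1) = (MulAut.conj (toR jq)).toMonoidHom.comp phr := by
      ext b : 1
      cases b <;> simp [hdl, rhor, phr, rhoq_gen, genq, phq_f, phq_t]
    exact DFunLike.congr_fun this w
  · intro x hx
    have hx' : ¬ 0 ≤ fQ x.1 := hx
    obtain ⟨h1, h2, h3⟩ := form_mul _ _ jq_coe x
    change 0 ≤ fQ (toR jq * x).1
    rw [h2]
    simp
    linarith
  · intro x hx
    have hx' : ¬ 0 ≤ fQ x.1 := hx
    obtain ⟨h1, h2, h3⟩ := form_mul _ _ jqi_coe x
    rw [← map_inv]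
    change 0 ≤ fQ (toR jq⁻¹ * x).1
    rw [h2]
    simp
    linarith
  · change fundT _ _ _
    norm_num [fundT, fP, fQ, fR]

lemma rhoq_hdl_one : (rhoq (hdl 1 cc)).1 = !![-1/4, 0; 0, -4] := by
  have h : rhoq (hdl 1 cc) = jq * (aq * bq * aq⁻¹ * bq⁻¹) * jq⁻¹ := by
    rw [hdl_cc]
    simp only [map_mul, map_inv, rhoq_gen]
    simp [genq]
    group
  rw [h]
  simp only [Matrix.SpecialLinearGroup.coe_mul, aq_coe, bq_coe, jq_coe, jqi_coe,
    aqi_coe, bqi_coe, Matrix.mul_fin_two]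
  norm_num

end Concrete
section Cover
open FreeGroup hiding map_mul map_one map_inv

/-- descending products -/
def descProd {G : Type*} [Group G] (F : ℕ → G) : ℕ → G
  | 0 => 1
  | k + 1 => F k * descProd F k

lemma prod_ofFn_desc {G : Type*} [Group G] (F : ℕ → G) (m : ℕ) :
    (List.ofFn fun i : Fin m => F (m - 1 - i)).prod = descProd F m := by
  induction m with
  | zero => simp [descProd]
  | succ m ih =>
    rw [List.ofFn_succ, List.prod_cons, descProd, ← ih]
    congr 2
    congr 1
    funext i
    congr 1
    simp only [Fin.val_succ]
    omega

/-- reversed index -/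
def ridx (m k : ℕ) : Fin (m + 2) := ⟨m + 1 - k, by omega⟩

lemma ridx_succ (m : ℕ) (i : Fin (m + 1)) : ridx m (m + 1 - 1 - i) = i.succ := by
  apply Fin.ext
  simp only [ridx, Fin.val_succ]
  omega

lemma prod_ofFn_split {G : Type*} [Group G] (m : ℕ) (F : Fin (m + 2) → G) :
    (List.ofFn F).prod = F 0 * descProd (fun k => F (ridx m k)) (m + 1) := by
  rw [List.ofFn_succ, List.prod_cons, ← prod_ofFn_desc]
  simp only [ridx_succ]

/-- commutator -/
def cmm {G : Type*} [Group G] (x y : G) : G := x * y * x⁻¹ * y⁻¹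

lemma map_cmm {G G' : Type*} [Group G] [Group G'] (f : G →* G') (x y : G) :
    f (cmm x y) = cmm (f x) (f y) := by simp only [cmm, map_mul, map_inv]

lemma map_relator {G : Type*} [Group G] (m : ℕ) (f : FreeGroup (Fin (m + 2) ⊕ Fin (m + 2)) →* G) :
    f (surfaceRelator (m + 2)) = cmm (f (of (Sum.inl 0))) (f (of (Sum.inr 0))) *
      descProd (fun k => cmm (f (of (Sum.inl (ridx m k)))) (f (of (Sum.inr (ridx m k))))) (m + 1) := by
  rw [surfaceRelator, map_list_prod, List.map_ofFn, prod_ofFn_split]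
  simp only [Function.comp_apply, map_mul, map_inv, cmm]

/-- generators of the surface group -/
def ggen (m : ℕ) (x : Fin (m + 2) ⊕ Fin (m + 2)) : SurfaceGroup (m + 2) := PresentedGroup.of x

lemma ggen_rel (m : ℕ) : cmm (ggen m (Sum.inl 0)) (ggen m (Sum.inr 0)) *
      descProd (fun k => cmm (ggen m (Sum.inl (ridx m k))) (ggen m (Sum.inr (ridx m k)))) (m + 1)
      = 1 := by
  have h : PresentedGroup.mk ({surfaceRelator (m + 2)} : Set (FreeGroup (Fin (m + 2) ⊕ Fin (m + 2))))
      (surfaceRelator (m + 2)) = 1 := PresentedGroup.one_of_mem rfl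
  rw [map_relator] at h
  exact h

lemma exists_hom {G : Type*} [Group G] (m : ℕ) (f : Fin (m + 2) ⊕ Fin (m + 2) → G)
    (h : cmm (f (Sum.inl 0)) (f (Sum.inr 0)) *
      descProd (fun k => cmm (f (Sum.inl (ridx m k))) (f (Sum.inr (ridx m k)))) (m + 1) = 1) :
    ∃ F : SurfaceGroup (m + 2) →* G, ∀ x, F (ggen m x) = f x := by
  refine ⟨PresentedGroup.toGroup (f := f) ?_, fun x => PresentedGroup.toGroup.of _⟩
  intro r hr
  rw [Set.mem_singleton_iff] at hr
  subst hr
  rw [map_relator]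
  simpa only [lift_apply_of] using h

lemma exists_hom_two {G : Type*} [Group G] (A B a b : G) (h : cmm a b * A * B = B * A) :
    ∃ F : SurfaceGroup 2 →* G, F (ggen 0 (Sum.inl 0)) = A ∧ F (ggen 0 (Sum.inr 0)) = B ∧
      F (ggen 0 (Sum.inl 1)) = a ∧ F (ggen 0 (Sum.inr 1)) = b := by
  obtain ⟨F, hF⟩ := exists_hom (G := G) 0 (Sum.elim ![A, a] ![B, b]) (by
    have hr : ridx 0 0 = 1 := rfl
    simp only [descProd, hr, Sum.elim_inl, Sum.elim_inr, Matrix.cons_val_zero, Matrix.cons_val_one,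
      mul_one]
    have : cmm a b = B * A * B⁻¹ * A⁻¹ := by rw [← h]; group
    rw [this, cmm]
    group)
  exact ⟨F, hF _, hF _, hF _, hF _⟩

lemma gen_two_rel : cmm (ggen 0 (Sum.inl 1)) (ggen 0 (Sum.inr 1)) =
    ggen 0 (Sum.inr 0) * ggen 0 (Sum.inl 0) * (ggen 0 (Sum.inr 0))⁻¹ * (ggen 0 (Sum.inl 0))⁻¹ := by
  have h := ggen_rel 0
  have hr : ridx 0 0 = 1 := rfl
  simp only [descProd, hr, mul_one, zero_add] at h
  rw [eq_comm, ← inv_eq_of_mul_eq_one_right h, cmm]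
  group

lemma descProd_conj {G : Type*} [Group G] (A B : G) (k : ℕ) :
    descProd (fun k => B ^ k * (B * A * B⁻¹ * A⁻¹) * (B ^ k)⁻¹) k
      = B ^ k * A * (B ^ k)⁻¹ * A⁻¹ := by
  induction k with
  | zero => simp [descProd]
  | succ k ih =>
    rw [descProd, ih, pow_succ]
    group

lemma cmm_conj {G : Type*} [Group G] (x a b : G) :
    cmm (x * a * x⁻¹) (x * b * x⁻¹) = x * cmm a b * x⁻¹ := by
  simp only [cmm]; group

lemma descProd_congr {G : Type*} [Group G] (F F' : ℕ → G) (n : ℕ) (h : ∀ k < n, F k = F' k) :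
    descProd F n = descProd F' n := by
  induction n with
  | zero => rfl
  | succ n ih =>
    rw [descProd, descProd, h n (by omega), ih fun k hk => h k (by omega)]

/-- the cyclic covering homomorphism -/
lemma exists_theta (m : ℕ) : ∃ θ : SurfaceGroup (m + 2) →* SurfaceGroup 2,
    θ (ggen m (Sum.inl 0)) = ggen 0 (Sum.inl 0) ∧
    θ (ggen m (Sum.inr 0)) = ggen 0 (Sum.inr 0) ^ (m + 1) ∧
    (∀ k < m + 1, θ (ggen m (Sum.inl (ridx m k))) =
      ggen 0 (Sum.inr 0) ^ k * ggen 0 (Sum.inl 1) * (ggen 0 (Sum.inr 0) ^ k)⁻¹) ∧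
    (∀ k < m + 1, θ (ggen m (Sum.inr (ridx m k))) =
      ggen 0 (Sum.inr 0) ^ k * ggen 0 (Sum.inr 1) * (ggen 0 (Sum.inr 0) ^ k)⁻¹) := by
  set A := ggen 0 (Sum.inl 0) with hA
  set B := ggen 0 (Sum.inr 0) with hB
  set a := ggen 0 (Sum.inl 1) with ha
  set b := ggen 0 (Sum.inr 1) with hb
  have hrel : cmm a b = B * A * B⁻¹ * A⁻¹ := gen_two_rel
  let fl : Fin (m + 2) → SurfaceGroup 2 := fun i =>
    if i = 0 then A else B ^ (m + 1 - i.1) * a * (B ^ (m + 1 - i.1))⁻¹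
  let fr : Fin (m + 2) → SurfaceGroup 2 := fun i =>
    if i = 0 then B ^ (m + 1) else B ^ (m + 1 - i.1) * b * (B ^ (m + 1 - i.1))⁻¹
  have hne : ∀ k < m + 1, ridx m k ≠ 0 := by
    intro k hk h
    have := congrArg Fin.val h
    simp only [ridx, Fin.val_zero] at this
    omega
  have hidx : ∀ k < m + 1, m + 1 - (ridx m k).1 = k := by
    intro k hk
    simp only [ridx]
    omega
  have hl : ∀ k < m + 1, fl (ridx m k) = B ^ k * a * (B ^ k)⁻¹ := by
    intro k hk
    simp only [fl, if_neg (hne k hk), hidx k hk]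
  have hr : ∀ k < m + 1, fr (ridx m k) = B ^ k * b * (B ^ k)⁻¹ := by
    intro k hk
    simp only [fr, if_neg (hne k hk), hidx k hk]
  obtain ⟨θ, hθ⟩ := exists_hom m (Sum.elim fl fr) (by
    simp only [Sum.elim_inl, Sum.elim_inr]
    rw [descProd_congr _ (fun k => B ^ k * (B * A * B⁻¹ * A⁻¹) * (B ^ k)⁻¹), descProd_conj]
    · simp only [fl, fr, if_true, cmm]
      group
    · intro k hk
      rw [hl k hk, hr k hk, cmm_conj, hrel])
  refine ⟨θ, ?_, ?_, fun k hk => ?_, fun k hk => ?_⟩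
  · rw [hθ]; simp [fl]
  · rw [hθ]; simp [fr]
  · rw [hθ, ← hl k hk, Sum.elim_inl]
  · rw [hθ, ← hr k hk, Sum.elim_inr]

/-- fibrewise left multiplication -/
def fibMul {S : Type*} [Group S] {m : ℕ} (u : Fin (m + 1) → S) : Equiv.Perm (Fin (m + 1) × S) where
  toFun x := (x.1, u x.1 * x.2)
  invFun x := (x.1, (u x.1)⁻¹ * x.2)
  left_inv x := by simp
  right_inv x := by simp

/-- the twisted rotation -/
def rotMul {S : Type*} [Group S] {m : ℕ} (b : S) : Equiv.Perm (Fin (m + 1) × S) where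
  toFun x := if x.1 = 0 then (Fin.last m, b * x.2) else (x.1 - 1, x.2)
  invFun x := if x.1 = Fin.last m then (0, b⁻¹ * x.2) else (x.1 + 1, x.2)
  left_inv x := by
    by_cases h : x.1 = 0
    · simp [h, Prod.ext_iff]
    · have : x.1 - 1 ≠ Fin.last m := by
        intro h2
        apply h
        have : x.1 = Fin.last m + 1 := by rw [← h2]; simp
        simpa using this
      simp [h, this]
  right_inv x := by
    by_cases h : x.1 = Fin.last m
    · simp [h, Prod.ext_iff]
    · have : x.1 + 1 ≠ 0 := by
        intro h2
        apply h
        have h3 : x.1 + 1 = Fin.last m + 1 := by rw [h2]; simp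
        exact add_right_cancel h3
      simp [h, this]

lemma rotMul_zero {S : Type*} [Group S] {m : ℕ} (b s : S) :
    rotMul (m := m) b (0, s) = (Fin.last m, b * s) := rfl

lemma rotMul_succ {S : Type*} [Group S] {m : ℕ} (b s : S) (k : ℕ) (hk : k + 1 < m + 1) :
    rotMul (m := m) b (⟨k + 1, hk⟩, s) = (⟨k, by omega⟩, s) := by
  have h : (⟨k + 1, hk⟩ : Fin (m + 1)) ≠ 0 := by
    intro h
    have := congrArg Fin.val h
    simp at this
  have h2 : (⟨k + 1, hk⟩ : Fin (m + 1)) - 1 = ⟨k, by omega⟩ := by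
    rw [sub_eq_iff_eq_add]
    apply Fin.ext
    rw [Fin.val_add_one_of_lt]
    rw [Fin.lt_def]
    simp only [Fin.val_last]
    omega
  simp only [rotMul, Equiv.coe_fn_mk, h, if_false, h2]

lemma rotMul_pow {S : Type*} [Group S] {m : ℕ} (b s : S) (k : ℕ) (hk : k < m + 1) :
    ((rotMul (m := m) b) ^ k) (⟨k, hk⟩, s) = (0, s) := by
  induction k with
  | zero => rfl
  | succ k ih => rw [pow_succ, Equiv.Perm.mul_apply, rotMul_succ, ih]

lemma fibMul_apply {S : Type*} [Group S] {m : ℕ} (u : Fin (m + 1) → S) (k : Fin (m + 1)) (s : S) :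
    fibMul u (k, s) = (k, u k * s) := rfl

lemma fibMul_cmm {S : Type*} [Group S] {m : ℕ} (u v : Fin (m + 1) → S) :
    cmm (fibMul u) (fibMul v) = fibMul (fun k => cmm (u k) (v k)) := by
  have h : ∀ u : Fin (m + 1) → S, (fibMul u)⁻¹ = fibMul (fun k => (u k)⁻¹) := by
    intro u
    rw [inv_eq_iff_mul_eq_one]
    ext1 ⟨k, s⟩
    simp [fibMul_apply]
  rw [cmm, h, h]
  ext1 ⟨k, s⟩
  simp only [Equiv.Perm.mul_apply, fibMul_apply, cmm, mul_assoc]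

theorem exists_cover (m : ℕ) : ∃ θ : SurfaceGroup (m + 2) →* SurfaceGroup 2,
    Function.Injective θ ∧ θ (ggen m (Sum.inl 0)) = ggen 0 (Sum.inl 0) ∧
    ∃ x, θ x = cmm (ggen 0 (Sum.inl 1)) (ggen 0 (Sum.inr 1)) := by
  obtain ⟨θ, h1, h2, h3, h4⟩ := exists_theta m
  refine ⟨θ, ?_, h1, ⟨cmm (ggen m (Sum.inl (ridx m 0))) (ggen m (Sum.inr (ridx m 0))), ?_⟩⟩
  swap
  · rw [map_cmm, h3 0 (by omega), h4 0 (by omega)]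
    simp
  let c : ℕ → SurfaceGroup (m + 2) :=
    fun k => cmm (ggen m (Sum.inl (ridx m k))) (ggen m (Sum.inr (ridx m k)))
  let a0 := ggen m (Sum.inl 0)
  let b0 := ggen m (Sum.inr 0)
  have hrel : descProd c (m + 1) * a0 * b0 = b0 * a0 := by
    have h := ggen_rel m
    rw [← inv_eq_of_mul_eq_one_right h, cmm]
    simp only [a0, b0]
    group
  obtain ⟨Φ, f1, f2, f3, f4⟩ := exists_hom_two
    (fibMul (m := m) (fun k => descProd c k * a0)) (rotMul b0)
    (fibMul (fun k => ggen m (Sum.inl (ridx m k)))) (fibMul (fun k => ggen m (Sum.inr (ridx m k)))) (by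
      rw [fibMul_cmm]
      ext1 ⟨⟨k, hk⟩, s⟩
      cases k with
      | zero =>
        simp only [Equiv.Perm.mul_apply]
        change fibMul _ (fibMul _ (rotMul b0 (0, s))) = rotMul b0 (fibMul _ (0, s))
        simp only [rotMul_zero, fibMul_apply]
        congr 1
        have : descProd c (m + 1) = c m * descProd c m := rfl
        rw [this] at hrel
        simp only [Fin.val_last, Fin.val_zero, descProd, one_mul]
        rw [← mul_assoc b0, ← hrel]
        simp only [c, mul_assoc]
      | succ k =>
        simp only [Equiv.Perm.mul_apply, rotMul_succ, fibMul_apply, descProd, c, mul_assoc])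
  have key : ∀ σ, ∀ s, Φ (θ σ) (0, s) = (0, σ * s) := by
    intro σ
    have hσ : σ ∈ Subgroup.closure (Set.range (ggen m)) := by
      have : Subgroup.closure (Set.range (ggen m)) = ⊤ := PresentedGroup.closure_range_of _
      rw [this]; trivial
    have hB : ∀ k (hk : k < m + 1) s, (rotMul (m := m) b0 ^ k)⁻¹ (0, s) = (⟨k, hk⟩, s) := by
      intro k hk s
      rw [Equiv.Perm.inv_eq_iff_eq, rotMul_pow]
    have hgen : ∀ i : Fin (m + 2), i ≠ 0 → ∃ k, k < m + 1 ∧ i = ridx m k := by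
      intro i hi
      have : i.1 ≠ 0 := fun h => hi (Fin.ext h)
      refine ⟨m + 1 - i.1, by omega, Fin.ext ?_⟩
      simp only [ridx]
      omega
    induction hσ using Subgroup.closure_induction with
    | mem x hx =>
      intro s
      obtain ⟨i | i, rfl⟩ := hx
      · by_cases hi : i = 0
        · subst hi
          rw [h1, f1, fibMul_apply]
          simp only [Fin.val_zero, descProd, one_mul, a0]
        · obtain ⟨k, hk, rfl⟩ := hgen i hi
          rw [h3 k hk]
          simp only [map_mul, map_inv, map_pow, f2, f3, Equiv.Perm.mul_apply]
          rw [hB k hk, fibMul_apply, rotMul_pow]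
      · by_cases hi : i = 0
        · subst hi
          rw [h2, map_pow, f2, pow_succ, Equiv.Perm.mul_apply, rotMul_zero]
          exact rotMul_pow b0 _ m (by omega)
        · obtain ⟨k, hk, rfl⟩ := hgen i hi
          rw [h4 k hk]
          simp only [map_mul, map_inv, map_pow, f2, f4, Equiv.Perm.mul_apply]
          rw [hB k hk, fibMul_apply, rotMul_pow]
    | one => intro s; simp
    | mul x y hx hy ihx ihy =>
      intro s
      rw [map_mul, map_mul, Equiv.Perm.mul_apply, ihy, ihx, mul_assoc]
    | inv x hx ih =>
      intro s
      rw [map_inv, map_inv, Equiv.Perm.inv_eq_iff_eq, ih, mul_inv_cancel_left]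
  intro σ τ h
  have h5 := key σ 1
  rw [h, key τ 1] at h5
  simpa using (congrArg Prod.snd h5).symm

end Cover
section Final
open Matrix

lemma rhor_diag : (rhor (cmm (ggen 0 (Sum.inl 1)) (ggen 0 (Sum.inr 1)))).1
    = Matrix.diagonal ![-1/4, -4] := by
  have h : cmm (ggen 0 (Sum.inl 1)) (ggen 0 (Sum.inr 1)) = hdl 1 cc := (hdl_cc 1).symm
  rw [h]
  change (rhoq (hdl 1 cc)).1.map (algebraMap ℚ ℝ) = _
  rw [rhoq_hdl_one]
  ext i j
  fin_cases i <;> fin_cases j <;> simp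

lemma rhor_a : (rhor (ggen 0 (Sum.inl 0))).1 = aq.1.map (algebraMap ℚ ℝ) := by
  have h : rhoq (ggen 0 (Sum.inl 0)) = aq := (rhoq_gen (Sum.inl 0)).trans (by simp [genq])
  change (rhoq (ggen 0 (Sum.inl 0))).1.map (algebraMap ℚ ℝ) = _
  rw [h]

end Final

/-- For every `n ≥ 2` and `g ≥ 2` there is a discrete, faithful, irreducible representation
of the genus-`g` surface group into `SL(n,ℝ)` with all matrix entries rational. -/
theorem exists_discrete_faithful_irreducible_rational_rep (n : ℕ) (hn : 2 ≤ n)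
    (g : ℕ) (hg : 2 ≤ g) :
    ∃ ρ : SurfaceGroup g →* Matrix.SpecialLinearGroup (Fin n) ℝ,
      Function.Injective ρ ∧
      (∀ x : SurfaceGroup g, ∀ i j,
        ((ρ x : Matrix.SpecialLinearGroup (Fin n) ℝ) : Matrix (Fin n) (Fin n) ℝ) i j ∈
          Set.range ((↑) : ℚ → ℝ)) ∧
      DiscreteTopology ↥ρ.range ∧
      (∀ W : Submodule ℝ (Fin n → ℝ),
        (∀ x : SurfaceGroup g, ∀ w ∈ W,
          ((ρ x : Matrix.SpecialLinearGroup (Fin n) ℝ) : Matrix (Fin n) (Fin n) ℝ).mulVec w ∈ W)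
        → W = ⊥ ∨ W = ⊤) := by
  obtain ⟨d, rfl⟩ : ∃ d, n = d + 1 := ⟨n - 1, by omega⟩
  obtain ⟨m, rfl⟩ : ∃ m, g = m + 2 := ⟨g - 2, by omega⟩
  have hd : d ≠ 0 := by omega
  obtain ⟨θ, hθ, hθa, z, hz⟩ := exists_cover m
  obtain ⟨N, hN, hNT⟩ := symHom_near_one d hd
  have key : ∀ γ : SurfaceGroup (m + 2), symHom d (rhor (θ γ)) ∈ N → γ = 1 := by
    intro γ hγ
    by_contra hne
    refine rhor_fund (θ γ) ?_ (hNT _ hγ)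
    rwa [Ne, map_eq_one_iff θ hθ]
  have h1N : (1 : Matrix.SpecialLinearGroup (Fin (d + 1)) ℝ) ∈ N := mem_of_mem_nhds hN
  refine ⟨(symHom d).comp (rhor.comp θ), ?_, ?_, ?_, ?_⟩
  · rw [injective_iff_map_eq_one]
    intro γ hγ
    apply key
    have : symHom d (rhor (θ γ)) = 1 := hγ
    rw [this]
    exact h1N
  · intro x i j
    refine ⟨symM d (rhoq (θ x)).1 i j, ?_⟩
    change _ = symM d ((rhoq (θ x)).1.map (algebraMap ℚ ℝ)) i j
    rw [symM_map]
    rfl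
  · have : IsTopologicalGroup (Matrix.SpecialLinearGroup (Fin (d + 1)) ℝ) :=
      Matrix.SpecialLinearGroup.topologicalGroup
    apply discreteTopology_of_isOpen_singleton_one
    rw [isOpen_singleton_iff_nhds_eq_pure]
    refine le_antisymm ?_ (pure_le_nhds _)
    rw [Filter.le_pure_iff, nhds_subtype_eq_comap]
    refine ⟨N, hN, ?_⟩
    rintro ⟨_, γ, rfl⟩ hγ
    have h1 := key γ hγ
    subst h1
    simp
  · intro W hW
    refine symM_irred d (Set.range fun x => (rhor (θ x)).1) ?_ ⟨1, by simp⟩ ⟨z, ?_⟩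
      (aq.1.map (algebraMap ℚ ℝ)) ⟨ggen m (Sum.inl 0), ?_⟩ ?_ ?_ ?_ W ?_
    · rintro _ ⟨x, rfl⟩ _ ⟨y, rfl⟩
      exact ⟨x * y, by simp⟩
    · change (rhor (θ z)).1 = _
      rw [hz, rhor_diag]
    · change (rhor (θ _)).1 = _
      rw [hθa, rhor_a]
    · simp [aq]
    · simp [aq]
    · simp [aq]
    · rintro _ ⟨x, rfl⟩ w hw
      exact hW x w hw
end

section
/- Existence of discrete, faithful, rational representations of surface groups in the symplectic group: for every k ≥ 1 and every g ≥ 2, there exists an injective group homomorphism ρ from the genus-g surface group Σ_g to Sp(2k,ℝ) such that every matrix entry of every element of the image of ρ is rational (lies in the range of the coercion ℚ → ℝ) and the image of ρ is a discrete subgroup of Sp(2k,ℝ). -/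
namespace SurfRep

open Matrix (SpecialLinearGroup)

/-- The four letters of the free group of rank two. -/
inductive Letter
  | a | b | A | B

/-- The inverse letter. -/
def Letter.bar : Letter → Letter
  | .a => .A
  | .b => .B
  | .A => .a
  | .B => .b

section torus

variable {G : Type*} [Group G]

/-- The group element of a letter. -/
def el (a b : G) : Letter → G
  | .a => a
  | .b => b
  | .A => a⁻¹
  | .B => b⁻¹

/-- The commutator. -/
def cm (a b : G) : G := a * b * a⁻¹ * b⁻¹

/-- Elements mapping the boundary interval to one of the four basic gaps. -/
def Gap (a b w : G) : Prop :=
  ∃ k : ℤ, w = cm a b ^ k ∨ w = a⁻¹ * cm a b ^ k ∨ w = a⁻¹ * b⁻¹ * cm a b ^ k ∨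
    w = b⁻¹ * cm a b ^ k

/-- Elements mapping the boundary interval into one of the four ping-pong intervals. -/
inductive Gd (a b : G) : Letter → G → Prop
  | base (y : Letter) (w : G) (h : Gap a b w) (h' : ¬ Gap a b (el a b y * w)) :
      Gd a b y (el a b y * w)
  | step (x y : Letter) (w : G) (h : Gd a b x w) (h' : y ≠ x.bar) : Gd a b y (el a b y * w)

theorem bar_mul (a b : G) (x : Letter) (w : G) : el a b x.bar * (el a b x * w) = w := by
  cases x <;> simp [Letter.bar, el]

theorem total_left (a b : G) (y : Letter) (w : G) (h : Gap a b w ∨ ∃ x, Gd a b x w) :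
    Gap a b (el a b y * w) ∨ ∃ x, Gd a b x (el a b y * w) := by
  rcases h with h | ⟨x, h⟩
  · by_cases h' : Gap a b (el a b y * w)
    · exact Or.inl h'
    · exact Or.inr ⟨y, Gd.base y w h h'⟩
  · by_cases hy : y = x.bar
    · subst hy
      cases h with
      | base _ w h h' => rw [bar_mul]; exact Or.inl h
      | step x' _ w h h' => rw [bar_mul]; exact Or.inr ⟨x', h⟩
    · exact Or.inr ⟨y, Gd.step x y w h hy⟩

theorem total (a b : G) (w : G) (hw : w ∈ Subgroup.closure {a, b}) :
    Gap a b w ∨ ∃ x, Gd a b x w := by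
  induction hw using Subgroup.closure_induction_left with
  | one => exact Or.inl ⟨0, Or.inl (by simp)⟩
  | mul_left x hx y hy ih =>
    rcases hx with rfl | rfl
    · exact total_left x b .a y ih
    · exact total_left a x .b y ih
  | inv_mul_cancel x hx y hy ih =>
    rcases hx with rfl | rfl
    · exact total_left x b .A y ih
    · exact total_left a x .B y ih

/-- The open cone of a letter. -/
def InK : Letter → ℚ → ℚ → Prop
  | .b, u, v => 0 < u ∧ 5 * u < 2 * v
  | .A, u, v => v < 2 * u ∧ 5 * u < 3 * v
  | .B, u, v => 2 * v < 3 * u ∧ 5 * u < 4 * v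
  | .a, u, v => v < u ∧ 0 < v

/-- The matrix maps the boundary interval into the interval of a letter. -/
def KK (x : Letter) (M : SpecialLinearGroup (Fin 2) ℚ) : Prop :=
  (InK x (M 0 0) (M 1 0) ∧ InK x (-M 0 1) (-M 1 1)) ∨
  (InK x (-M 0 0) (-M 1 0) ∧ InK x (M 0 1) (M 1 1))

/-- First generator. -/
def mA : SpecialLinearGroup (Fin 2) ℚ := ⟨!![-4, 2; -5/2, 1], by norm_num [Matrix.det_fin_two]⟩
/-- Second generator. -/
def mB : SpecialLinearGroup (Fin 2) ℚ := ⟨!![1, -1; 5, -4], by norm_num [Matrix.det_fin_two]⟩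

theorem mul00 (M N : SpecialLinearGroup (Fin 2) ℚ) :
    (M * N) 0 0 = M 0 0 * N 0 0 + M 0 1 * N 1 0 := by
  simp [Matrix.mul_apply, Fin.sum_univ_two]
theorem mul01 (M N : SpecialLinearGroup (Fin 2) ℚ) :
    (M * N) 0 1 = M 0 0 * N 0 1 + M 0 1 * N 1 1 := by
  simp [Matrix.mul_apply, Fin.sum_univ_two]
theorem mul10 (M N : SpecialLinearGroup (Fin 2) ℚ) :
    (M * N) 1 0 = M 1 0 * N 0 0 + M 1 1 * N 1 0 := by
  simp [Matrix.mul_apply, Fin.sum_univ_two]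
theorem mul11 (M N : SpecialLinearGroup (Fin 2) ℚ) :
    (M * N) 1 1 = M 1 0 * N 0 1 + M 1 1 * N 1 1 := by
  simp [Matrix.mul_apply, Fin.sum_univ_two]
theorem inv00 (M : SpecialLinearGroup (Fin 2) ℚ) : M⁻¹ 0 0 = M 1 1 := by
  simp [Matrix.SpecialLinearGroup.coe_inv, Matrix.adjugate_fin_two]
theorem inv01 (M : SpecialLinearGroup (Fin 2) ℚ) : M⁻¹ 0 1 = - M 0 1 := by
  simp [Matrix.SpecialLinearGroup.coe_inv, Matrix.adjugate_fin_two]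
theorem inv10 (M : SpecialLinearGroup (Fin 2) ℚ) : M⁻¹ 1 0 = - M 1 0 := by
  simp [Matrix.SpecialLinearGroup.coe_inv, Matrix.adjugate_fin_two]
theorem inv11 (M : SpecialLinearGroup (Fin 2) ℚ) : M⁻¹ 1 1 = M 0 0 := by
  simp [Matrix.SpecialLinearGroup.coe_inv, Matrix.adjugate_fin_two]

theorem mA00 : mA 0 0 = -4 := rfl
theorem mA01 : mA 0 1 = 2 := rfl
theorem mA10 : mA 1 0 = -5/2 := rfl
theorem mA11 : mA 1 1 = 1 := rfl
theorem mB00 : mB 0 0 = 1 := rfl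
theorem mB01 : mB 0 1 = -1 := rfl
theorem mB10 : mB 1 0 = 5 := rfl
theorem mB11 : mB 1 1 = -4 := rfl

theorem det2 (M : SpecialLinearGroup (Fin 2) ℚ) : M 0 0 * M 1 1 - M 0 1 * M 1 0 = 1 := by
  have := M.det_coe
  rwa [Matrix.det_fin_two] at this

variable (a b : G) (φ : G →* SpecialLinearGroup (Fin 2) ℚ)

theorem step_KK (ha : φ a = mA) (hb : φ b = mB) (x y : Letter) (w : G) (hxy : y ≠ x.bar)
    (h : KK x (φ w)) : KK y (φ (el a b y * w)) := by
  unfold KK at *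
  rw [map_mul]
  simp only [mul00, mul01, mul10, mul11]
  cases x <;> cases y <;> simp only [Letter.bar, ne_eq, not_true_eq_false, reduceCtorEq] at hxy <;>
    simp only [el, map_inv, ha, hb, inv00, inv01, inv10, inv11, mA00, mA01, mA10, mA11,
      mB00, mB01, mB10, mB11, InK] at h ⊢ <;>
    rcases h with ⟨⟨h1, h2⟩, ⟨h3, h4⟩⟩ | ⟨⟨h1, h2⟩, ⟨h3, h4⟩⟩ <;>
    first
      | (left; refine ⟨⟨?_, ?_⟩, ⟨?_, ?_⟩⟩ <;> linarith)
      | (right; refine ⟨⟨?_, ?_⟩, ⟨?_, ?_⟩⟩ <;> linarith)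

/-- The powers of the boundary element. -/
theorem cpow (ha : φ a = mA) (hb : φ b = mB) (k : ℤ) :
    φ (cm a b ^ k) 0 0 = (-4) ^ k ∧ φ (cm a b ^ k) 0 1 = 0 ∧ φ (cm a b ^ k) 1 0 = 0 ∧
    φ (cm a b ^ k) 1 1 = (-4) ^ (-k) := by
  have h1 : φ (cm a b) 0 0 = -4 ∧ φ (cm a b) 0 1 = 0 ∧ φ (cm a b) 1 0 = 0 ∧
    φ (cm a b) 1 1 = -1/4 := by
    simp only [cm, map_mul, map_inv, mul00, mul01, mul10, mul11, ha, hb, inv00, inv01, inv10,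
      inv11, mA00, mA01, mA10, mA11, mB00, mB01, mB10, mB11]
    norm_num
  obtain ⟨e1, e2, e3, e4⟩ := h1
  have h4 : (-4 : ℚ) ≠ 0 := by norm_num
  induction k using Int.induction_on with
  | zero => simp
  | succ i ih =>
    obtain ⟨i1, i2, i3, i4⟩ := ih
    rw [zpow_add_one, map_mul]
    simp only [mul00, mul01, mul10, mul11, i1, i2, i3, i4, e1, e2, e3, e4]
    rw [neg_add, zpow_add₀ h4, zpow_add₀ h4]
    norm_num
  | pred i ih =>
    obtain ⟨i1, i2, i3, i4⟩ := ih
    rw [zpow_sub_one, map_mul, map_inv]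
    simp only [mul00, mul01, mul10, mul11, i1, i2, i3, i4, e1, e2, e3, e4, inv00, inv01, inv10,
      inv11]
    rw [neg_sub, sub_eq_add_neg, sub_eq_add_neg, zpow_add₀ h4, add_comm 1, zpow_add₀ h4]
    norm_num

/-- The signs of the diagonal entries of the powers of the boundary element agree. -/
theorem cpow' (ha : φ a = mA) (hb : φ b = mB) (k : ℤ) :
    φ (cm a b ^ k) 0 1 = 0 ∧ φ (cm a b ^ k) 1 0 = 0 ∧
    ((0 < φ (cm a b ^ k) 0 0 ∧ 0 < φ (cm a b ^ k) 1 1) ∨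
    (φ (cm a b ^ k) 0 0 < 0 ∧ φ (cm a b ^ k) 1 1 < 0)) := by
  obtain ⟨h1, h2, h3, h4⟩ := cpow a b φ ha hb k
  have hd := det2 (φ (cm a b ^ k))
  refine ⟨h2, h3, ?_⟩
  rw [h2, zero_mul, sub_zero] at hd
  exact mul_pos_iff.1 (by rw [hd]; exact one_pos)

theorem base_KK (ha : φ a = mA) (hb : φ b = mB) (y : Letter) (w : G) (h : Gap a b w)
    (h' : ¬ Gap a b (el a b y * w)) : KK y (φ (el a b y * w)) := by
  obtain ⟨k, h⟩ := h
  obtain ⟨c1, c2, c3⟩ := cpow' a b φ ha hb k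
  have key : (KK y (φ (el a b y * w))) ∨ Gap a b (el a b y * w) := by
    rcases h with rfl | rfl | rfl | rfl <;> cases y
    case inr.inl.a => right; exact ⟨k, Or.inl (by simp [el])⟩
    case inr.inl.B =>
      right; refine ⟨k - 1, Or.inr (Or.inr (Or.inl ?_))⟩
      rw [sub_eq_add_neg, add_comm, zpow_add, zpow_neg_one]
      generalize cm a b ^ k = C
      simp only [el, cm]; group
    case inr.inr.inl.a => right; exact ⟨k, Or.inr (Or.inr (Or.inr (by simp [el, mul_assoc])))⟩
    case inr.inr.inl.b =>
      right; refine ⟨k + 1, Or.inr (Or.inl ?_)⟩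
      rw [add_comm, zpow_add, zpow_one]
      generalize cm a b ^ k = C
      simp only [el, cm]; group
    case inr.inr.inr.b => right; exact ⟨k, Or.inl (by simp [el])⟩
    case inr.inr.inr.A => right; exact ⟨k, Or.inr (Or.inr (Or.inl (by simp [el, mul_assoc])))⟩
    case inl.A => right; exact ⟨k, Or.inr (Or.inl rfl)⟩
    case inl.B => right; exact ⟨k, Or.inr (Or.inr (Or.inr rfl))⟩
    all_goals
      left
      unfold KK
      simp only [map_mul]
      generalize φ (cm a b ^ k) = C at *
      simp only [el, map_inv, ha, hb, mul00, mul01, mul10, mul11, inv00, inv01, inv10, inv11,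
        mA00, mA01, mA10, mA11, mB00, mB01, mB10, mB11, InK, c1, c2]
      rcases c3 with ⟨c3, c4⟩ | ⟨c3, c4⟩ <;>
      first
        | (left; refine ⟨⟨?_, ?_⟩, ⟨?_, ?_⟩⟩ <;> linarith)
        | (right; refine ⟨⟨?_, ?_⟩, ⟨?_, ?_⟩⟩ <;> linarith)
  exact key.resolve_right h'

theorem Gd_KK (ha : φ a = mA) (hb : φ b = mB) (x : Letter) (w : G) (h : Gd a b x w) :
    KK x (φ w) := by
  induction h with
  | base y w h hn => exact base_KK a b φ ha hb y w h hn
  | step x y w h hn ih => exact step_KK a b φ ha hb x y w hn ih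

/-- The sign pattern `± (+ -; + -)`. -/
def Pat (M : SpecialLinearGroup (Fin 2) ℚ) : Prop :=
  (0 < M 0 0 ∧ M 0 1 < 0 ∧ 0 < M 1 0 ∧ M 1 1 < 0) ∨
  (M 0 0 < 0 ∧ 0 < M 0 1 ∧ M 1 0 < 0 ∧ 0 < M 1 1)

theorem KK_Pat (x : Letter) (M : SpecialLinearGroup (Fin 2) ℚ) (h : KK x M) : Pat M := by
  unfold KK at h
  unfold Pat
  cases x <;> simp only [InK] at h <;>
    rcases h with ⟨⟨h1, h2⟩, ⟨h3, h4⟩⟩ | ⟨⟨h1, h2⟩, ⟨h3, h4⟩⟩ <;>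
    first
      | (left; refine ⟨?_, ?_, ?_, ?_⟩ <;> linarith)
      | (right; refine ⟨?_, ?_, ?_, ?_⟩ <;> linarith)

theorem pat_of_not_mem (ha : φ a = mA) (hb : φ b = mB) (w : G)
    (hw : w ∈ Subgroup.closure {a, b}) (hc : w ∉ Subgroup.zpowers (cm a b)) : Pat (φ w) := by
  rcases total a b w hw with ⟨k, h⟩ | ⟨x, h⟩
  · obtain ⟨c1, c2, c3⟩ := cpow' a b φ ha hb k
    rcases h with rfl | rfl | rfl | rfl
    · exact absurd (Subgroup.zpow_mem_zpowers _ _) hc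
    all_goals
      unfold Pat
      simp only [map_mul]
      generalize φ (cm a b ^ k) = C at *
      simp only [map_inv, ha, hb, mul00, mul01, mul10, mul11, inv00, inv01, inv10, inv11,
        mA00, mA01, mA10, mA11, mB00, mB01, mB10, mB11, c1, c2]
      rcases c3 with ⟨c3, c4⟩ | ⟨c3, c4⟩ <;>
      first
        | (left; refine ⟨?_, ?_, ?_, ?_⟩ <;> linarith)
        | (right; refine ⟨?_, ?_, ?_, ?_⟩ <;> linarith)
  · exact KK_Pat x _ (Gd_KK a b φ ha hb x w h)

theorem pat_bound (ha : φ a = mA) (hb : φ b = mB) (w : G)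
    (hw : w ∈ Subgroup.closure {a, b}) (hc : w ∉ Subgroup.zpowers (cm a b)) :
    φ w 0 0 * φ w 1 1 ≤ -1/15 := by
  have hp := pat_of_not_mem a b φ ha hb w hw hc
  have hcm : cm a b ∈ Subgroup.closure {a, b} := by
    have h1 : a ∈ Subgroup.closure {a, b} := Subgroup.subset_closure (by simp)
    have h2 : b ∈ Subgroup.closure {a, b} := Subgroup.subset_closure (by simp)
    exact mul_mem (mul_mem (mul_mem h1 h2) (inv_mem h1)) (inv_mem h2)
  have hm : w⁻¹ * cm a b * w ∈ Subgroup.closure {a, b} := mul_mem (mul_mem (inv_mem hw) hcm) hw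
  obtain ⟨e1, e2, e3, e4⟩ := cpow a b φ ha hb 1
  rw [zpow_one] at e1 e2 e3 e4
  norm_num at e1 e4
  have hd := det2 (φ w)
  by_cases h : w⁻¹ * cm a b * w ∈ Subgroup.zpowers (cm a b)
  · exfalso
    obtain ⟨k, hk⟩ := Subgroup.mem_zpowers_iff.1 h
    obtain ⟨c1, c2, c3⟩ := cpow' a b φ ha hb k
    rw [hk] at c1
    simp only [map_mul, map_inv, mul00, mul01, mul10, mul11, e1, e2, e3, e4, inv00, inv01,
      inv10, inv11] at c1
    have h2 : 0 < φ w 0 1 * φ w 1 1 ∨ φ w 0 1 * φ w 1 1 < 0 := by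
      rcases hp with ⟨h1, h2, h3, h4⟩ | ⟨h1, h2, h3, h4⟩
      · left; exact mul_pos_of_neg_of_neg h2 h4
      · left; exact mul_pos h2 h4
    rcases h2 with h2 | h2 <;> linarith
  · have hq := pat_of_not_mem a b φ ha hb _ hm h
    unfold Pat at hq
    simp only [map_mul, map_inv, mul00, mul01, mul10, mul11, e1, e2, e3, e4, inv00, inv01,
      inv10, inv11] at hq
    have h2 : 0 < φ w 0 0 * φ w 1 0 := by
      rcases hp with ⟨h1, h2, h3, h4⟩ | ⟨h1, h2, h3, h4⟩
      · exact mul_pos h1 h3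
      · exact mul_pos_of_neg_of_neg h1 h3
    rcases hq with ⟨h1, -, h3, h4⟩ | ⟨h1, -, h3, h4⟩
    · linarith
    · exfalso
      linarith

end torus

section alternating

variable {G : Type*} [Group G]

/-- Alternating products of elements of two subgroups outside of `C`. -/
inductive Alt (C : Subgroup G) (H : Bool → Subgroup G) : Bool → G → Prop
  | base (i : Bool) (x : G) (h : x ∈ H i) (hC : x ∉ C) : Alt C H i x
  | step (i : Bool) (x g : G) (h : x ∈ H i) (hC : x ∉ C) (hg : Alt C H (!i) g) :
      Alt C H i (x * g)

variable (C : Subgroup G) (H : Bool → Subgroup G)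

theorem alt_C_mul (hCH : ∀ i, C ≤ H i) (i : Bool) (g c : G) (hc : c ∈ C) (h : Alt C H i g) :
    Alt C H i (c * g) := by
  cases h with
  | base _ _ h hC =>
    exact Alt.base i _ (mul_mem (hCH i hc) h) (fun h' => hC ((C.mul_mem_cancel_left hc).1 h'))
  | step _ x g h hC hg =>
    rw [← mul_assoc]
    exact Alt.step i _ g (mul_mem (hCH i hc) h) (fun h' => hC ((C.mul_mem_cancel_left hc).1 h')) hg

theorem alt_left (hCH : ∀ i, C ≤ H i) (i : Bool) (g y : G) (hy : y ∈ H i)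
    (h : g ∈ C ∨ ∃ j, Alt C H j g) : y * g ∈ C ∨ ∃ j, Alt C H j (y * g) := by
  rcases h with h | ⟨j, h⟩
  · by_cases h' : y * g ∈ C
    · exact Or.inl h'
    · exact Or.inr ⟨i, Alt.base i _ (mul_mem hy (hCH i h)) h'⟩
  · by_cases hyC : y ∈ C
    · exact Or.inr ⟨j, alt_C_mul C H hCH j g y hyC h⟩
    by_cases hij : j = i
    · subst hij
      cases h with
      | base _ _ h hC =>
        by_cases h' : y * g ∈ C
        · exact Or.inl h'
        · exact Or.inr ⟨j, Alt.base j _ (mul_mem hy h) h'⟩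
      | step _ x g h hC hg =>
        rw [← mul_assoc]
        by_cases h' : y * x ∈ C
        · exact Or.inr ⟨!j, alt_C_mul C H hCH _ g _ h' hg⟩
        · exact Or.inr ⟨j, Alt.step j _ _ (mul_mem hy h) h' hg⟩
    · have : j = !i := by cases i <;> cases j <;> simp_all
      subst this
      exact Or.inr ⟨i, Alt.step i y g hy hyC h⟩

theorem alt_total (hCH : ∀ i, C ≤ H i) (g : G)
    (hg : g ∈ Subgroup.closure {x : G | ∃ i, x ∈ H i}) : g ∈ C ∨ ∃ j, Alt C H j g := by
  induction hg using Subgroup.closure_induction_left with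
  | one => exact Or.inl (one_mem _)
  | mul_left x hx y hy ih =>
    obtain ⟨i, hi⟩ := hx
    exact alt_left C H hCH i y x hi ih
  | inv_mul_cancel x hx y hy ih =>
    obtain ⟨i, hi⟩ := hx
    exact alt_left C H hCH i y _ (inv_mem hi) ih

/-- The sign of a side. -/
def sg : Bool → ℚ
  | true => 1
  | false => -1

theorem sg_mul (i : Bool) : sg i * sg i = 1 := by cases i <;> norm_num [sg]
theorem sg_not (i : Bool) : sg (!i) = - sg i := by cases i <;> norm_num [sg]

/-- Normal form of matrices of alternating products. -/
def Nice (e : ℚ) (M : SpecialLinearGroup (Fin 2) ℚ) : Prop :=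
  ∃ p q r s t u : ℚ, 0 < p ∧ 0 < q ∧ 0 < r ∧ 0 < s ∧ t * t = 1 ∧ u * u = 1 ∧
    M 0 0 = t * p ∧ M 1 0 = e * t * r ∧ M 0 1 = u * q ∧ M 1 1 = e * u * s ∧
    1/15 ≤ p * s ∧ 1/15 ≤ q * r

/-- Normal form of matrices of elements of one side. -/
def Nice1 (e : ℚ) (M : SpecialLinearGroup (Fin 2) ℚ) : Prop :=
  ∃ p q r s t : ℚ, 0 < p ∧ 0 < q ∧ 0 < r ∧ 0 < s ∧ t * t = 1 ∧
    M 0 0 = t * p ∧ M 1 0 = e * t * r ∧ M 0 1 = - e * t * q ∧ M 1 1 = - t * s ∧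
    1/15 ≤ p * s ∧ 1/15 ≤ q * r

theorem Nice1.nice {e : ℚ} (he : e * e = 1) {M : SpecialLinearGroup (Fin 2) ℚ}
    (h : Nice1 e M) : Nice e M := by
  obtain ⟨p, q, r, s, t, hp, hq, hr, hs, ht, h1, h2, h3, h4, h5, h6⟩ := h
  refine ⟨p, q, r, s, t, - e * t, hp, hq, hr, hs, ht, ?_, h1, h2, h3, ?_, h5, h6⟩
  · linear_combination t * t * he + ht
  · rw [h4]; linear_combination t * s * he

theorem nice_step {e : ℚ} (he : e * e = 1) {X M : SpecialLinearGroup (Fin 2) ℚ}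
    (hX : Nice1 e X) (hM : Nice (-e) M) : Nice e (X * M) := by
  have hd := det2 M
  obtain ⟨p, q, r, s, t, hp, hq, hr, hs, ht, h1, h2, h3, h4, h5, h6⟩ := hX
  obtain ⟨p', q', r', s', t', u', hp', hq', hr', hs', ht', hu', k1, k2, k3, k4, k5, k6⟩ := hM
  have hsum : 1 ≤ p' * s' + q' * r' := by
    have hD : (-e * t' * u') * (p' * s' - q' * r') = 1 := by
      rw [k1, k2, k3, k4] at hd; linear_combination hd
    have hD2 : (p' * s' - q' * r') ^ 2 = 1 := by
      have h3 : (-e * t' * u') * (-e * t' * u') = 1 := by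
        linear_combination (t' * t' * u' * u') * he + (u' * u') * ht' + hu'
      linear_combination (-(p' * s' - q' * r') ^ 2) * h3 +
        ((-e * t' * u') * (p' * s' - q' * r') + 1) * hD
    have := mul_pos hp' hs'
    have := mul_pos hq' hr'
    nlinarith
  have hps : 0 < p' * s' := mul_pos hp' hs'
  have hqr : 0 < q' * r' := mul_pos hq' hr'
  have b1 : 0 ≤ (p * s - 1/15) * (p' * s') := mul_nonneg (by linarith) hps.le
  have b2 : 0 ≤ (q * r - 1/15) * (q' * r') := mul_nonneg (by linarith) hqr.le
  have b3 : 0 ≤ (p * s - 1/15) * (q' * r') := mul_nonneg (by linarith) hqr.le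
  have b4 : 0 ≤ (q * r - 1/15) * (p' * s') := mul_nonneg (by linarith) hps.le
  refine ⟨p * p' + q * r', p * q' + q * s', r * p' + s * r', r * q' + s * s', t * t', t * u',
    by positivity, by positivity, by positivity, by positivity, ?_, ?_, ?_, ?_, ?_, ?_, ?_, ?_⟩
  · linear_combination t' * t' * ht + ht'
  · linear_combination u' * u' * ht + hu'
  · rw [mul00, h1, h3, k1, k2]; linear_combination (t * q * t' * r') * he
  · rw [mul10, h2, h4, k1, k2]; ring
  · rw [mul01, h1, h3, k3, k4]; linear_combination (t * q * u' * s') * he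
  · rw [mul11, h2, h4, k3, k4]; ring
  · have : 0 ≤ p * p' * (r * q') := by positivity
    have : 0 ≤ q * r' * (s * s') := by positivity
    nlinarith
  · have : 0 ≤ p * q' * (r * p') := by positivity
    have : 0 ≤ q * s' * (s * r') := by positivity
    nlinarith

theorem alt_nice (φ : G →* SpecialLinearGroup (Fin 2) ℚ)
    (hn : ∀ i x, x ∈ H i → x ∉ C → Nice1 (sg i) (φ x)) (i : Bool) (g : G) (h : Alt C H i g) :
    Nice (sg i) (φ g) := by
  induction h with
  | base i x h hC => exact (hn i x h hC).nice (sg_mul i)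
  | step i x g h hC hg ih =>
    rw [map_mul]
    rw [sg_not] at ih
    exact nice_step (sg_mul i) (hn i x h hC) ih

theorem nice_bound {e : ℚ} (he : e * e = 1) {M : SpecialLinearGroup (Fin 2) ℚ} (h : Nice e M) :
    1/15 ≤ |M 0 1 * M 1 0| := by
  obtain ⟨p, q, r, s, t, u, hp, hq, hr, hs, ht, hu, h1, h2, h3, h4, h5, h6⟩ := h
  have e1 : (M 0 1 * M 1 0) ^ 2 = (q * r) ^ 2 := by
    rw [h2, h3]
    linear_combination (q * r) ^ 2 * (e ^ 2 * t ^ 2 * hu + t ^ 2 * he + ht)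
  rw [(sq_eq_sq_iff_abs_eq_abs _ _).1 e1, abs_of_pos (mul_pos hq hr)]
  exact h6

theorem pat_nice1 {M : SpecialLinearGroup (Fin 2) ℚ} (h : Pat M) (hb : M 0 0 * M 1 1 ≤ -1/15) :
    Nice1 1 M := by
  have hd := det2 M
  rcases h with ⟨h1, h2, h3, h4⟩ | ⟨h1, h2, h3, h4⟩
  · exact ⟨M 0 0, - M 0 1, M 1 0, - M 1 1, 1, h1, by linarith, h3, by linarith, by ring, by ring,
      by ring, by ring, by ring, by linarith, by linarith⟩
  · exact ⟨-M 0 0, M 0 1, - M 1 0, M 1 1, -1, by linarith, h2, by linarith, h4, by ring, by ring,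
      by ring, by ring, by ring, by linarith, by linarith⟩

/-- Conjugation with `diag(1,-1)`. -/
def tw : SpecialLinearGroup (Fin 2) ℚ →* SpecialLinearGroup (Fin 2) ℚ where
  toFun M := ⟨!![M 0 0, - M 0 1; - M 1 0, M 1 1], by
    rw [Matrix.det_fin_two_of]; linear_combination det2 M⟩
  map_one' := by
    ext i j
    fin_cases i <;> fin_cases j <;> simp
  map_mul' M N := by
    ext i j
    fin_cases i <;> fin_cases j
    · change (M * N) 0 0 = _
      rw [mul00]
      refine Eq.trans ?_ (mul00 _ _).symm
      change _ = M 0 0 * N 0 0 + (-M 0 1) * (-N 1 0)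
      ring
    · change -(M * N) 0 1 = _
      rw [mul01]
      refine Eq.trans ?_ (mul01 _ _).symm
      change _ = M 0 0 * (-N 0 1) + (-M 0 1) * (N 1 1)
      ring
    · change -(M * N) 1 0 = _
      rw [mul10]
      refine Eq.trans ?_ (mul10 _ _).symm
      change _ = (-M 1 0) * N 0 0 + (M 1 1) * (-N 1 0)
      ring
    · change (M * N) 1 1 = _
      rw [mul11]
      refine Eq.trans ?_ (mul11 _ _).symm
      change _ = (-M 1 0) * (-N 0 1) + (M 1 1) * (N 1 1)
      ring

theorem tw00 (M : SpecialLinearGroup (Fin 2) ℚ) : tw M 0 0 = M 0 0 := rfl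
theorem tw01 (M : SpecialLinearGroup (Fin 2) ℚ) : tw M 0 1 = - M 0 1 := rfl
theorem tw10 (M : SpecialLinearGroup (Fin 2) ℚ) : tw M 1 0 = - M 1 0 := rfl
theorem tw11 (M : SpecialLinearGroup (Fin 2) ℚ) : tw M 1 1 = M 1 1 := rfl

theorem tw_tw (M : SpecialLinearGroup (Fin 2) ℚ) : tw (tw M) = M := by
  ext i j
  fin_cases i <;> fin_cases j <;> simp [tw00, tw01, tw10, tw11]

theorem nice1_tw {M : SpecialLinearGroup (Fin 2) ℚ} (h : Nice1 1 (tw M)) : Nice1 (-1) M := by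
  obtain ⟨p, q, r, s, t, hp, hq, hr, hs, ht, h1, h2, h3, h4, h5, h6⟩ := h
  rw [tw00] at h1
  rw [tw10] at h2
  rw [tw01] at h3
  rw [tw11] at h4
  exact ⟨p, q, r, s, t, hp, hq, hr, hs, ht, h1, by linarith, by linarith, h4, h5, h6⟩

theorem double_bound (φ : G →* SpecialLinearGroup (Fin 2) ℚ) (a b a' b' : G)
    (hc : cm a b = cm a' b') (hgen : Subgroup.closure {a, b, a', b'} = ⊤)
    (ha : φ a = mA) (hb : φ b = mB) (ha' : φ a' = tw mA) (hb' : φ b' = tw mB)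
    (g : G) (hg : g ≠ 1) : 1/15 ≤ |φ g 0 1 * φ g 1 0| ∨ 1/2 ≤ |φ g 0 0 - 1| := by
  let H : Bool → Subgroup G := fun i => cond i (Subgroup.closure {a, b}) (Subgroup.closure {a', b'})
  have hcl : ∀ x y : G, cm x y ∈ Subgroup.closure {x, y} := fun x y => by
    have h1 : x ∈ Subgroup.closure {x, y} := Subgroup.subset_closure (by simp)
    have h2 : y ∈ Subgroup.closure {x, y} := Subgroup.subset_closure (by simp)
    exact mul_mem (mul_mem (mul_mem h1 h2) (inv_mem h1)) (inv_mem h2)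
  have hCH : ∀ i, Subgroup.zpowers (cm a b) ≤ H i := by
    intro i
    rw [Subgroup.zpowers_le]
    cases i
    · rw [hc]; exact hcl a' b'
    · exact hcl a b
  have htop : g ∈ Subgroup.closure {x : G | ∃ i, x ∈ H i} := by
    have : Subgroup.closure {a, b, a', b'} ≤ Subgroup.closure {x : G | ∃ i, x ∈ H i} := by
      apply Subgroup.closure_mono
      rintro x (rfl | rfl | rfl | rfl)
      · exact ⟨true, Subgroup.subset_closure (by simp)⟩
      · exact ⟨true, Subgroup.subset_closure (by simp)⟩
      · exact ⟨false, Subgroup.subset_closure (by simp)⟩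
      · exact ⟨false, Subgroup.subset_closure (by simp)⟩
    rw [hgen] at this
    exact this (Subgroup.mem_top g)
  have hn : ∀ i x, x ∈ H i → x ∉ Subgroup.zpowers (cm a b) → Nice1 (sg i) (φ x) := by
    intro i x hx hxC
    cases i
    · rw [hc] at hxC
      apply nice1_tw
      have h1 : (tw.comp φ) a' = mA := by simp [ha', tw_tw]
      have h2 : (tw.comp φ) b' = mB := by simp [hb', tw_tw]
      exact pat_nice1 (pat_of_not_mem a' b' _ h1 h2 x hx hxC) (pat_bound a' b' _ h1 h2 x hx hxC)
    · exact pat_nice1 (pat_of_not_mem a b φ ha hb x hx hxC) (pat_bound a b φ ha hb x hx hxC)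
  rcases alt_total _ H hCH g htop with h | ⟨i, h⟩
  · right
    obtain ⟨k, rfl⟩ := Subgroup.mem_zpowers_iff.1 h
    obtain ⟨h1, -⟩ := cpow a b φ ha hb k
    rw [h1]
    have hk : k ≠ 0 := by rintro rfl; simp at hg
    rcases Int.even_or_odd k with he | ho
    · rw [he.neg_zpow]
      rcases lt_or_gt_of_ne hk with hk | hk
      · have : (4 : ℚ) ^ k ≤ 4 ^ (-1 : ℤ) := zpow_le_zpow_right₀ (by norm_num) (by lia)
        norm_num at this
        rw [abs_of_neg] <;> linarith
      · have : (4 : ℚ) ^ (1 : ℤ) ≤ 4 ^ k := zpow_le_zpow_right₀ (by norm_num) (by lia)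
        norm_num at this
        rw [abs_of_pos] <;> linarith
    · rw [ho.neg_zpow]
      have : (0 : ℚ) < 4 ^ k := by positivity
      rw [abs_of_neg] <;> linarith
  · left
    exact nice_bound (sg_mul i) (alt_nice _ H φ hn i g h)

end alternating

/-- The images of the generators of the genus two surface group. -/
def gen2 : Fin 2 ⊕ Fin 2 → SpecialLinearGroup (Fin 2) ℚ
  | Sum.inl 0 => mA
  | Sum.inr 0 => mB
  | Sum.inl 1 => tw mB
  | Sum.inr 1 => tw mA

theorem gen2_rel : ∀ r ∈ ({surfaceRelator 2} : Set (FreeGroup (Fin 2 ⊕ Fin 2))),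
    FreeGroup.lift gen2 r = 1 := by
  rintro r rfl
  simp only [surfaceRelator, List.ofFn_succ, List.ofFn_zero, List.prod_cons, List.prod_nil,
    map_mul, map_inv, FreeGroup.lift_apply_of, mul_one]
  simp only [Fin.succ_zero_eq_one, gen2]
  ext i j
  fin_cases i <;> fin_cases j <;>
    simp only [Fin.zero_eta, Fin.mk_one, mul00, mul01, mul10, mul11, inv00, inv01, inv10, inv11,
      tw00, tw01, tw10, tw11, mA00, mA01, mA10, mA11, mB00, mB01, mB10, mB11] <;> norm_num

/-- The representation of the genus two surface group. -/
def rep2 : SurfaceGroup 2 →* SpecialLinearGroup (Fin 2) ℚ := PresentedGroup.toGroup gen2_rel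

theorem rep2_bound (g : SurfaceGroup 2) (hg : g ≠ 1) :
    1/15 ≤ |rep2 g 0 1 * rep2 g 1 0| ∨ 1/2 ≤ |rep2 g 0 0 - 1| := by
  let o : Fin 2 ⊕ Fin 2 → SurfaceGroup 2 := PresentedGroup.of
  have ho : ∀ i, rep2 (o i) = gen2 i := fun i => PresentedGroup.toGroup.of gen2_rel
  refine double_bound rep2 (o (Sum.inl 0)) (o (Sum.inr 0)) (o (Sum.inr 1)) (o (Sum.inl 1))
    ?_ ?_ (ho _) (ho _) (ho _) (ho _) g hg
  · have h : PresentedGroup.mk ({surfaceRelator 2} : Set (FreeGroup (Fin 2 ⊕ Fin 2)))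
        (surfaceRelator 2) = 1 := PresentedGroup.one_of_mem rfl
    simp only [surfaceRelator, List.ofFn_succ, List.ofFn_zero, List.prod_cons, List.prod_nil,
      map_mul, map_inv, mul_one, Fin.succ_zero_eq_one] at h
    change cm (o (Sum.inl 0)) (o (Sum.inr 0)) * cm (o (Sum.inl 1)) (o (Sum.inr 1)) = 1 at h
    rw [eq_inv_of_mul_eq_one_left h]
    simp only [cm]; group
  · rw [eq_top_iff, ← PresentedGroup.closure_range_of, Subgroup.closure_le]
    rintro _ ⟨i, rfl⟩
    apply Subgroup.subset_closure
    change o i ∈ _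
    rcases i with i | i <;> fin_cases i <;> simp

end SurfRep

namespace SurfRep

open Matrix (SpecialLinearGroup)

section cover

variable {S : Type*} [Group S] {m : ℕ}

/-- The lift of `a` to the cover. -/
def permA (A : S) : Equiv.Perm (Fin (m + 1) × S) where
  toFun z := Fin.cases (motive := fun _ => Fin (m + 1) × S) (Fin.last m, A * z.2)
    (fun j => (j.castSucc, z.2)) z.1
  invFun z := Fin.lastCases (motive := fun _ => Fin (m + 1) × S) (0, A⁻¹ * z.2)
    (fun j => (j.succ, z.2)) z.1
  left_inv := by
    rintro ⟨i, h⟩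
    refine Fin.cases ?_ (fun j => ?_) i <;> simp
  right_inv := by
    rintro ⟨i, h⟩
    refine Fin.lastCases ?_ (fun j => ?_) i <;> simp

theorem permA_zero (A h : S) : permA (m := m) A (0, h) = (Fin.last m, A * h) := rfl
theorem permA_succ (A h : S) (j : Fin m) : permA (m := m) A (j.succ, h) = (j.castSucc, h) := rfl

/-- The lift of a fibrewise translation to the cover. -/
def permF (f : Fin (m + 1) → S) : Equiv.Perm (Fin (m + 1) × S) where
  toFun z := (z.1, f z.1 * z.2)
  invFun z := (z.1, (f z.1)⁻¹ * z.2)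
  left_inv := by rintro ⟨i, h⟩; simp
  right_inv := by rintro ⟨i, h⟩; simp

theorem permF_apply (f : Fin (m + 1) → S) (i : Fin (m + 1)) (h : S) :
    permF f (i, h) = (i, f i * h) := rfl

theorem permF_mul (f f' : Fin (m + 1) → S) : permF f * permF f' = permF (f * f') := by
  ext1 ⟨i, h⟩
  simp [permF_apply, mul_assoc]

theorem permF_inv (f : Fin (m + 1) → S) : (permF f)⁻¹ = permF (f⁻¹) := by
  rw [inv_eq_iff_mul_eq_one, permF_mul]
  ext1 ⟨i, h⟩
  simp [permF_apply]

/-- Initial products of the commutators. -/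
def EE (X Y : Fin (m + 1) → S) (j : ℕ) : S := ((List.ofFn fun i => cm (X i) (Y i)).take j).prod

theorem EE_succ (X Y : Fin (m + 1) → S) (i : Fin (m + 1)) :
    EE X Y (i + 1) = EE X Y i * cm (X i) (Y i) := by
  unfold EE
  rw [List.prod_take_succ _ _ (by rw [List.length_ofFn]; exact i.2), List.getElem_ofFn]

theorem perm_rel (A B : S) (X Y : Fin (m + 1) → S)
    (h : cm A B * (List.ofFn fun i => cm (X i) (Y i)).prod = 1) :
    cm (permA A) (permF fun i => (EE X Y i)⁻¹ * B) * cm (permF X) (permF Y) = 1 := by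
  have hE : EE X Y (m + 1) = (List.ofFn fun i => cm (X i) (Y i)).prod := by
    unfold EE
    rw [List.take_of_length_le (by simp)]
  rw [← hE] at h
  have e : cm (permF X) (permF Y) = permF (fun i => cm (X i) (Y i)) := by
    simp only [cm, permF_mul, permF_inv]; rfl
  have key : permF (fun i => cm (X i) (Y i)) * (permA A * permF fun i => (EE X Y i)⁻¹ * B) =
      (permF fun i => (EE X Y i)⁻¹ * B) * permA A := by
    ext1 ⟨i, z⟩
    refine Fin.cases ?_ (fun j => ?_) i
    · simp only [Equiv.Perm.mul_apply, permF_apply, permA_zero]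
      congr 1
      have h2 := EE_succ X Y (Fin.last m)
      simp only [Fin.val_last] at h2
      rw [h2] at h
      have h3 : EE X Y ((0 : Fin (m + 1)) : ℕ) = 1 := by simp [EE]
      rw [h3, Fin.val_last]
      have h4 : cm (X (Fin.last m)) (Y (Fin.last m)) = (EE X Y m)⁻¹ * (cm A B)⁻¹ := by
        rw [← eq_inv_of_mul_eq_one_right h]; group
      rw [h4]
      simp only [cm]; group
    · simp only [Equiv.Perm.mul_apply, permF_apply, permA_succ]
      congr 1
      have h2 := EE_succ X Y j.castSucc
      rw [Fin.val_succ]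
      simp only [Fin.val_castSucc] at h2 ⊢
      rw [h2]; group
  rw [e]
  generalize permF (fun i => cm (X i) (Y i)) = E at *
  generalize (permF fun i => (EE X Y i)⁻¹ * B) = Q at *
  generalize permA A = P at *
  have : E = Q * P * (P * Q)⁻¹ := by rw [← key]; group
  rw [this]; simp only [cm]; group

theorem permA_pow (A h : S) (i : Fin (m + 1)) : (permA A ^ (i : ℕ)) (i, h) = (0, h) := by
  obtain ⟨i, hi⟩ := i
  induction i with
  | zero => simp
  | succ i ih =>
    have := permA_succ A h (⟨i, by lia⟩ : Fin m)
    simp only [Fin.succ_mk, Fin.castSucc_mk] at this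
    simp only [pow_succ, Equiv.Perm.mul_apply]
    rw [this]
    exact ih (by lia)

theorem conj_prod (a b x y : S) (h : cm a b * cm x y = 1) (n : ℕ) :
    cm (a ^ n) b * (List.ofFn fun i : Fin n =>
      cm (a ^ (i : ℕ) * x * (a ^ (i : ℕ))⁻¹) (a ^ (i : ℕ) * y * (a ^ (i : ℕ))⁻¹)).prod = 1 := by
  induction n with
  | zero => simp [cm]
  | succ n ih =>
    rw [List.ofFn_succ', List.concat_eq_append, List.prod_append, List.prod_singleton]
    simp only [Fin.val_castSucc, Fin.val_last]
    rw [eq_inv_of_mul_eq_one_right ih]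
    have hx : cm (a ^ n * x * (a ^ n)⁻¹) (a ^ n * y * (a ^ n)⁻¹) = a ^ n * cm x y * (a ^ n)⁻¹ := by
      simp only [cm]; group
    rw [hx, eq_inv_of_mul_eq_one_right h, pow_succ]
    simp only [cm]; group

end cover

/-- The relator of a genus `g` surface group evaluated. -/
theorem lift_relator {S : Type*} [Group S] (g : ℕ) (f : Fin g ⊕ Fin g → S) :
    FreeGroup.lift f (surfaceRelator g) =
      (List.ofFn fun i => cm (f (Sum.inl i)) (f (Sum.inr i))).prod := by
  unfold surfaceRelator
  rw [map_list_prod, List.map_ofFn]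
  congr 2
  funext i
  simp [cm]

theorem rel_of (g : ℕ) : (List.ofFn fun i : Fin g =>
    cm (PresentedGroup.of (rels := {surfaceRelator g}) (Sum.inl i))
      (PresentedGroup.of (Sum.inr i))).prod = 1 := by
  rw [← lift_relator g PresentedGroup.of]
  have h : PresentedGroup.mk ({surfaceRelator g} : Set (FreeGroup (Fin g ⊕ Fin g)))
        (surfaceRelator g) = 1 := PresentedGroup.one_of_mem rfl
  rw [← h]
  congr 1
  ext i
  simp
  rfl

/-- A surface group of genus `m + 2` embeds in the one of genus two. -/
theorem exists_embedding (m : ℕ) :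
    ∃ f : SurfaceGroup (m + 2) →* SurfaceGroup 2, Function.Injective f := by
  let o : Fin 2 ⊕ Fin 2 → SurfaceGroup 2 := PresentedGroup.of
  let O : Fin (m + 2) ⊕ Fin (m + 2) → SurfaceGroup (m + 2) := PresentedGroup.of
  have ro : cm (o (Sum.inl 0)) (o (Sum.inr 0)) * cm (o (Sum.inl 1)) (o (Sum.inr 1)) = 1 := by
    have := rel_of 2
    simpa [List.ofFn_succ] using this
  have rO : cm (O (Sum.inl 0)) (O (Sum.inr 0)) *
      (List.ofFn fun i : Fin (m + 1) => cm (O (Sum.inl i.succ)) (O (Sum.inr i.succ))).prod = 1 := by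
    have := rel_of (m + 2)
    rwa [List.ofFn_succ, List.prod_cons] at this
  let F : Fin (m + 2) ⊕ Fin (m + 2) → SurfaceGroup 2 := Sum.elim
    (Fin.cases (motive := fun _ => SurfaceGroup 2) (o (Sum.inl 0) ^ (m + 1))
      fun i => o (Sum.inl 0) ^ (i : ℕ) * o (Sum.inl 1) * (o (Sum.inl 0) ^ (i : ℕ))⁻¹)
    (Fin.cases (motive := fun _ => SurfaceGroup 2) (o (Sum.inr 0))
      fun i => o (Sum.inl 0) ^ (i : ℕ) * o (Sum.inr 1) * (o (Sum.inl 0) ^ (i : ℕ))⁻¹)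
  have hF : ∀ r ∈ ({surfaceRelator (m + 2)} : Set _), FreeGroup.lift F r = 1 := by
    rintro r rfl
    rw [lift_relator, List.ofFn_succ, List.prod_cons]
    exact conj_prod _ _ _ _ ro (m + 1)
  let X : Fin (m + 1) → SurfaceGroup (m + 2) := fun i => O (Sum.inl i.succ)
  let Y : Fin (m + 1) → SurfaceGroup (m + 2) := fun i => O (Sum.inr i.succ)
  let T : Fin 2 ⊕ Fin 2 → Equiv.Perm (Fin (m + 1) × SurfaceGroup (m + 2)) := Sum.elim
    ![permA (O (Sum.inl 0)), permF X]
    ![permF fun i => (EE X Y i)⁻¹ * O (Sum.inr 0), permF Y]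
  have hT : ∀ r ∈ ({surfaceRelator 2} : Set _), FreeGroup.lift T r = 1 := by
    rintro r rfl
    rw [lift_relator]
    have := perm_rel _ _ X Y rO
    simpa [List.ofFn_succ, T] using this
  let f : SurfaceGroup (m + 2) →* SurfaceGroup 2 := PresentedGroup.toGroup hF
  let θ : SurfaceGroup 2 →* Equiv.Perm (Fin (m + 1) × SurfaceGroup (m + 2)) :=
    PresentedGroup.toGroup hT
  have hf : ∀ i, f (O i) = F i := fun i => PresentedGroup.toGroup.of hF
  have hθ : ∀ i, θ (o i) = T i := fun i => PresentedGroup.toGroup.of hT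
  have θa : θ (o (Sum.inl 0)) = permA (O (Sum.inl 0)) := hθ _
  have θx : θ (o (Sum.inl 1)) = permF X := hθ _
  have θb : θ (o (Sum.inr 0)) = permF fun i => (EE X Y i)⁻¹ * O (Sum.inr 0) := hθ _
  have θy : θ (o (Sum.inr 1)) = permF Y := hθ _
  have hconj : ∀ (i : Fin (m + 1)) (W : Fin (m + 1) → SurfaceGroup (m + 2)) (z),
      (permA (O (Sum.inl 0)) ^ (i : ℕ) * permF W * (permA (O (Sum.inl 0)) ^ (i : ℕ))⁻¹ :
        Equiv.Perm (Fin (m + 1) × SurfaceGroup (m + 2))) (0, z) =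
        (0, W i * z) := by
    intro i W z
    have h1 : (permA (O (Sum.inl 0)) ^ (i : ℕ))⁻¹ (0, z) = (i, z) := by
      rw [Equiv.Perm.inv_eq_iff_eq, permA_pow]
    rw [Equiv.Perm.mul_apply, Equiv.Perm.mul_apply, h1, permF_apply, permA_pow]
  have key : ∀ h : SurfaceGroup (m + 2), ∀ z, θ (f h) (0, z) = (0, h * z) := by
    intro h
    have hh : h ∈ Subgroup.closure (Set.range O) := by
      have : Subgroup.closure (Set.range O) = ⊤ := PresentedGroup.closure_range_of _
      rw [this]; trivial
    induction hh using Subgroup.closure_induction with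
    | one => intro z; simp
    | mul x y _ _ ihx ihy => intro z; simp [ihx, ihy, mul_assoc]
    | inv x _ ih =>
      intro z
      rw [map_inv, map_inv, Equiv.Perm.inv_eq_iff_eq, ih]; simp
    | mem x hx =>
      obtain ⟨i, rfl⟩ := hx
      intro z
      rw [hf]
      rcases i with i | i
      · refine Fin.cases ?_ (fun j => ?_) i
        · change θ (o (Sum.inl 0) ^ (m + 1)) (0, z) = _
          rw [map_pow, θa, pow_succ, Equiv.Perm.mul_apply, permA_zero]
          exact permA_pow _ _ (Fin.last m)
        · change θ (o (Sum.inl 0) ^ (j : ℕ) * o (Sum.inl 1) * (o (Sum.inl 0) ^ (j : ℕ))⁻¹) (0, z) = _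
          rw [map_mul, map_mul, map_inv, map_pow, θa, θx, hconj]
      · refine Fin.cases ?_ (fun j => ?_) i
        · change θ (o (Sum.inr 0)) (0, z) = _
          rw [θb, permF_apply]
          simp [EE]
        · change θ (o (Sum.inl 0) ^ (j : ℕ) * o (Sum.inr 1) * (o (Sum.inl 0) ^ (j : ℕ))⁻¹) (0, z) = _
          rw [map_mul, map_mul, map_inv, map_pow, θa, θy, hconj]
  refine ⟨f, (injective_iff_map_eq_one f).2 fun h hh => ?_⟩
  have := key h 1
  rw [hh, map_one] at this
  simpa using this.symm

/-- The diagonal embedding of `SL₂(ℚ)` into the real symplectic group. -/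
def toSp (k : ℕ) : SpecialLinearGroup (Fin 2) ℚ →* Matrix.symplecticGroup (Fin k) ℝ where
  toFun M := ⟨Matrix.fromBlocks (((M 0 0 : ℚ) : ℝ) • 1) (((M 0 1 : ℚ) : ℝ) • 1)
      (((M 1 0 : ℚ) : ℝ) • 1) (((M 1 1 : ℚ) : ℝ) • 1), by
    have h : ((M 0 0 : ℚ) : ℝ) * ((M 1 1 : ℚ) : ℝ) - ((M 0 1 : ℚ) : ℝ) * ((M 1 0 : ℚ) : ℝ) = 1 := by
      exact_mod_cast det2 M
    rw [SymplecticGroup.mem_iff, Matrix.J, Matrix.fromBlocks_transpose, Matrix.fromBlocks_multiply,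
      Matrix.fromBlocks_multiply]
    congr 1
    · simp [smul_smul, mul_comm]
    · simp [smul_smul]
      rw [← sub_eq_add_neg, ← sub_smul]
      rw [← neg_one_smul ℝ (1 : Matrix (Fin k) (Fin k) ℝ)]
      congr 1; linarith
    · simp [smul_smul]
      rw [← sub_eq_add_neg, ← sub_smul]
      nth_rewrite 2 [← one_smul ℝ (1 : Matrix (Fin k) (Fin k) ℝ)]
      congr 1
    · simp [smul_smul, mul_comm]⟩
  map_one' := by
    apply Subtype.ext
    simp
  map_mul' M N := by
    apply Subtype.ext
    simp only [mul00, mul01, mul10, mul11]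
    rw [Submonoid.coe_mul, Matrix.fromBlocks_multiply]
    simp only [Rat.cast_add, Rat.cast_mul, Matrix.smul_mul, Matrix.one_mul, smul_smul, ← add_smul]

end SurfRep

/-- For every `k ≥ 1` and `g ≥ 2` there is a discrete and faithful representation of the
genus-`g` surface group into `Sp(2k,ℝ)` with all matrix entries rational. -/
theorem exists_discrete_faithful_rational_rep_symplectic (k : ℕ) (hk : 1 ≤ k)
    (g : ℕ) (hg : 2 ≤ g) :
    ∃ ρ : SurfaceGroup g →* Matrix.symplecticGroup (Fin k) ℝ,
      Function.Injective ρ ∧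
      (∀ x : SurfaceGroup g, ∀ i j,
        ((ρ x : Matrix.symplecticGroup (Fin k) ℝ) :
            Matrix (Fin k ⊕ Fin k) (Fin k ⊕ Fin k) ℝ) i j ∈
          Set.range ((↑) : ℚ → ℝ)) ∧
      DiscreteTopology ↥ρ.range := by
  obtain ⟨m, rfl⟩ := Nat.exists_eq_add_of_le' hg
  obtain ⟨f, hf⟩ := SurfRep.exists_embedding m
  let σ : SurfaceGroup (m + 2) →* Matrix.SpecialLinearGroup (Fin 2) ℚ := SurfRep.rep2.comp f
  let ρ : SurfaceGroup (m + 2) →* Matrix.symplecticGroup (Fin k) ℝ := (SurfRep.toSp k).comp σ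
  have hσ : ∀ x : SurfaceGroup (m + 2), x ≠ 1 →
      1/15 ≤ |σ x 0 1 * σ x 1 0| ∨ 1/2 ≤ |σ x 0 0 - 1| := fun x hx =>
    SurfRep.rep2_bound (f x) (fun h => hx (hf (by rw [h, map_one])))
  let z : Fin k := ⟨0, hk⟩
  have e00 : ∀ x, (ρ x).1 (Sum.inl z) (Sum.inl z) = ((σ x 0 0 : ℚ) : ℝ) := fun x => by
    simp [ρ, SurfRep.toSp]
  have e01 : ∀ x, (ρ x).1 (Sum.inl z) (Sum.inr z) = ((σ x 0 1 : ℚ) : ℝ) := fun x => by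
    simp [ρ, SurfRep.toSp]
  have e10 : ∀ x, (ρ x).1 (Sum.inr z) (Sum.inl z) = ((σ x 1 0 : ℚ) : ℝ) := fun x => by
    simp [ρ, SurfRep.toSp]
  let U : Set (Matrix.symplecticGroup (Fin k) ℝ) :=
    {M | |M.1 (Sum.inl z) (Sum.inr z) * M.1 (Sum.inr z) (Sum.inl z)| < 1/15 ∧
      |M.1 (Sum.inl z) (Sum.inl z) - 1| < 1/2}
  have hU : ∀ x, ρ x ∈ U → x = 1 := by
    intro x hx
    by_contra hne
    obtain ⟨h1, h2⟩ := hx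
    rw [e01, e10] at h1
    rw [e00] at h2
    rcases hσ x hne with h | h
    · have : ((1/15 : ℚ) : ℝ) ≤ ((|σ x 0 1 * σ x 1 0| : ℚ) : ℝ) := by exact_mod_cast h
      push_cast at this
      linarith
    · have : ((1/2 : ℚ) : ℝ) ≤ ((|σ x 0 0 - 1| : ℚ) : ℝ) := by exact_mod_cast h
      push_cast at this
      linarith
  have h1U : (1 : Matrix.symplecticGroup (Fin k) ℝ) ∈ U := by
    simp [U]
  have hopen : IsOpen U := by
    have hc : ∀ i j, Continuous fun M : Matrix.symplecticGroup (Fin k) ℝ => M.1 i j :=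
      fun i j => continuous_subtype_val.matrix_elem i j
    exact (isOpen_lt (((hc _ _).mul (hc _ _)).abs) continuous_const).inter
      (isOpen_lt (((hc _ _).sub continuous_const).abs) continuous_const)
  refine ⟨ρ, ?_, ?_, ?_⟩
  · rw [injective_iff_map_eq_one]
    intro x hx
    exact hU x (by rw [hx]; exact h1U)
  · intro x i j
    rcases i with i | i <;> rcases j with j | j <;> by_cases hij : i = j
    all_goals
      simp only [ρ, SurfRep.toSp, MonoidHom.comp_apply, MonoidHom.coe_mk, OneHom.coe_mk,
        Matrix.fromBlocks_apply₁₁, Matrix.fromBlocks_apply₁₂, Matrix.fromBlocks_apply₂₁,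
        Matrix.fromBlocks_apply₂₂, Matrix.smul_apply, Matrix.one_apply, hij, if_true, if_false,
        smul_eq_mul, mul_one, mul_zero]
      first
        | exact ⟨_, rfl⟩
        | exact ⟨0, by simp⟩
  · rw [discreteTopology_iff_isOpen_singleton]
    rintro ⟨_, y, rfl⟩
    have hmul : Continuous fun M : ρ.range => ρ y⁻¹ * (M : Matrix.symplecticGroup (Fin k) ℝ) := by
      apply Continuous.subtype_mk
      exact continuous_const.matrix_mul (continuous_subtype_val.comp continuous_subtype_val)
    have := hopen.preimage hmul
    convert this
    ext ⟨_, x, rfl⟩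
    simp only [Set.mem_singleton_iff, Set.mem_preimage]
    constructor
    · intro h
      have h : ρ x = ρ y := congrArg Subtype.val h
      rw [h, ← map_mul, inv_mul_cancel, map_one]
      exact h1U
    · intro h
      rw [← map_mul] at h
      have := hU _ h
      rw [inv_mul_eq_one] at this
      rw [this]
end
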